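/- Let R be a commutative ring. The assignment √I ↦ Loc(R/I), for I ranging over finitely generated ideals of R, is a well-defined, inclusion-reversing bijection from the Zariski lattice of R (the lattice of radicals of finitely generated ideals of R, ordered by inclusion) onto the poset of localizing subcategories of D(R) generated by a single compact object; in particular the latter poset is a distributive lattice isomorphic to the opposite of the Zariski lattice. -/

import Mathlib

open CategoryTheory CategoryTheory.Limits CategoryTheory.Pretriangulated ZeroObject

universe w w' v u

section TriangulatedDefs

variable {T : Type u} [Category.{v} T] [Preadditive T] [HasZeroObject T]
  [HasShift T ℤ] [∀ n : ℤ, (shiftFunctor T n).Additive] [Pretriangulated T]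

/-- A localizing subcategory of a (pre)triangulated category, encoded as a set of
objects: it is closed under isomorphisms, contains the zero object, is stable
under shifts, closed under cones of distinguished triangles (hence a full
triangulated subcategory), and closed under arbitrary small coproducts
(phrased via colimit cofans, so that no global existence of coproducts
is needed). -/
structure IsLocalizingSub (S : Set T) : Prop where
  zero_mem : (0 : T) ∈ S
  mem_of_iso : ∀ {x y : T}, (x ≅ y) → x ∈ S → y ∈ S
  shift_mem : ∀ (n : ℤ) {x : T}, x ∈ S → x⟦n⟧ ∈ S
  cone_mem : ∀ (Tr : Triangle T), Tr ∈ distinguishedTriangles →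
    Tr.obj₁ ∈ S → Tr.obj₂ ∈ S → Tr.obj₃ ∈ S
  coprod_mem : ∀ {ι : Type w} (f : ι → T) (c : Cofan f), IsColimit c →
    (∀ i, f i ∈ S) → c.pt ∈ S

/-- A colocalizing subcategory: as `IsLocalizingSub` but with products instead
of coproducts. -/
structure IsColocalizingSub (S : Set T) : Prop where
  zero_mem : (0 : T) ∈ S
  mem_of_iso : ∀ {x y : T}, (x ≅ y) → x ∈ S → y ∈ S
  shift_mem : ∀ (n : ℤ) {x : T}, x ∈ S → x⟦n⟧ ∈ S
  cone_mem : ∀ (Tr : Triangle T), Tr ∈ distinguishedTriangles →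
    Tr.obj₁ ∈ S → Tr.obj₂ ∈ S → Tr.obj₃ ∈ S
  prod_mem : ∀ {ι : Type w} (f : ι → T) (c : Fan f), IsLimit c →
    (∀ i, f i ∈ S) → c.pt ∈ S

/-- `Loc S`: the smallest localizing subcategory containing the set of
objects `S` (the intersection of all localizing subcategories containing it). -/
def Loc (S : Set T) : Set T :=
  ⋂₀ {L : Set T | IsLocalizingSub.{w} L ∧ S ⊆ L}

/-- The right orthogonal of a set of objects. -/
def rightOrth (C : Set T) : Set T :=
  {x : T | ∀ ⦃c : T⦄, c ∈ C → ∀ (g : c ⟶ x), g = 0}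

end TriangulatedDefs

section CompactDefs

variable {T : Type u} [Category.{v} T] [Preadditive T]

/-- The canonical comparison map `⨁ᵢ Hom(x, fᵢ) →+ Hom(x, ∐ f)` associated to a
cofan `c` on a family `f`. -/
noncomputable def cofanHomComparison {ι : Type w} (x : T) (f : ι → T) (c : Cofan f) :
    (Π₀ i, (x ⟶ f i)) →+ (x ⟶ c.pt) :=
  letI := Classical.decEq ι
  DFinsupp.sumAddHom (fun i => AddMonoidHom.mk' (fun φ => φ ≫ c.inj i)
    (fun φ ψ => Preadditive.add_comp _ _ _ φ ψ (c.inj i)))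

/-- An object `x` is compact if `Hom(x, -)` commutes with arbitrary small
coproducts, i.e. for every colimit cofan on a family `f`, the canonical map
`⨁ᵢ Hom(x, fᵢ) → Hom(x, ∐ f)` is bijective. -/
def IsCompactObj (x : T) : Prop :=
  ∀ ⦃ι : Type w⦄ (f : ι → T) (c : Cofan f), IsColimit c →
    Function.Bijective (cofanHomComparison x f c)

end CompactDefs

section DR

variable (R : Type u) [CommRing R] [HasDerivedCategory.{w'} (ModuleCat.{u} R)]

/-- The `R`-module `M`, regarded as an object of the derived category `D(R)`,
as a complex concentrated in degree `0`. -/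
noncomputable def smod (M : ModuleCat.{u} R) : DerivedCategory (ModuleCat.{u} R) :=
  (DerivedCategory.singleFunctor (ModuleCat.{u} R) 0).obj M

end DR
section Statement2

variable (R : Type u) [CommRing R] [HasDerivedCategory.{w'} (ModuleCat.{u} R)]

/-- The localizing subcategory of `D(R)` generated by `R/I`. -/
noncomputable def locQuot (I : Ideal R) : Set (DerivedCategory (ModuleCat.{u} R)) :=
  Loc.{u} {smod R (ModuleCat.of R (R ⧸ I))}

end Statement2

set_option linter.unusedSectionVars false
set_option linter.unusedVariables false
section AbsLoc

variable {T : Type u} [Category.{v} T] [Preadditive T] [HasZeroObject T]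
  [HasShift T ℤ] [∀ n : ℤ, (shiftFunctor T n).Additive] [Pretriangulated T]

theorem IsLocalizingSub.mem₂ {S : Set T} (hS : IsLocalizingSub.{w} S) (Tr : Triangle T)
    (h : Tr ∈ distinguishedTriangles) (h1 : Tr.obj₁ ∈ S) (h3 : Tr.obj₃ ∈ S) : Tr.obj₂ ∈ S :=
  hS.cone_mem _ (inv_rot_of_distTriang _ h) (hS.shift_mem (-1) h3) h1

theorem IsLocalizingSub.unshift_mem {S : Set T} (hS : IsLocalizingSub.{w} S) (n : ℤ) {X : T}
    (h : X⟦n⟧ ∈ S) : X ∈ S :=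
  hS.mem_of_iso ((shiftEquiv T n).unitIso.app X).symm (hS.shift_mem (-n) h)

theorem IsLocalizingSub.mem₁ {S : Set T} (hS : IsLocalizingSub.{w} S) (Tr : Triangle T)
    (h : Tr ∈ distinguishedTriangles) (h2 : Tr.obj₂ ∈ S) (h3 : Tr.obj₃ ∈ S) : Tr.obj₁ ∈ S :=
  hS.unshift_mem 1 (hS.cone_mem _ (rot_of_distTriang _ h) h2 h3)

theorem IsLocalizingSub.isZero_mem {S : Set T} (hS : IsLocalizingSub.{w} S) {X : T}
    (h : IsZero X) : X ∈ S :=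
  hS.mem_of_iso ((isZero_zero T).iso h) hS.zero_mem

theorem loc_isLocalizing (S : Set T) : IsLocalizingSub.{w} (Loc.{w} S) where
  zero_mem := fun L hL => hL.1.zero_mem
  mem_of_iso := fun e hx L hL => hL.1.mem_of_iso e (hx L hL)
  shift_mem := fun n _ hx L hL => hL.1.shift_mem n (hx L hL)
  cone_mem := fun Tr h h1 h2 L hL => hL.1.cone_mem Tr h (h1 L hL) (h2 L hL)
  coprod_mem := fun f c hc h _ hL => hL.1.coprod_mem f c hc (fun i => h i _ hL)

theorem subset_loc (S : Set T) : S ⊆ Loc.{w} S := fun _ hx _ hL => hL.2 hx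

theorem loc_le {S L : Set T} (hL : IsLocalizingSub.{w} L) (h : S ⊆ L) : Loc.{w} S ⊆ L :=
  fun _ hx => hx L ⟨hL, h⟩

theorem mem_loc_self (C : T) : C ∈ Loc.{w} {C} := subset_loc _ rfl

theorem loc_singleton_le {C : T} {L : Set T} (hL : IsLocalizingSub.{w} L) (h : C ∈ L) :
    Loc.{w} {C} ⊆ L := loc_le hL (by simpa using h)

end AbsLoc

section AbsCompact

variable {T : Type u} [Category.{v} T] [Preadditive T]

open Classical in
noncomputable def cproj {ι : Type w} {f : ι → T} {c : Cofan f} (hc : IsColimit c) (i : ι) :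
    c.pt ⟶ f i :=
  Cofan.IsColimit.desc hc (fun j => if h : j = i then eqToHom (by rw [h]) else 0)

theorem inj_cproj_self {ι : Type w} {f : ι → T} {c : Cofan f} (hc : IsColimit c) (i : ι) :
    c.inj i ≫ cproj hc i = 𝟙 _ := by
  simp [cproj, Cofan.IsColimit.fac]

theorem inj_cproj_ne {ι : Type w} {f : ι → T} {c : Cofan f} (hc : IsColimit c) {i j : ι}
    (h : i ≠ j) : c.inj i ≫ cproj hc j = 0 := by
  simp [cproj, Cofan.IsColimit.fac, h]

noncomputable def esum {ι : Type w} {f : ι → T} {c : Cofan f} (hc : IsColimit c)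
    (s : Finset ι) : c.pt ⟶ c.pt := ∑ i ∈ s, cproj hc i ≫ c.inj i

theorem inj_esum {ι : Type w} {f : ι → T} {c : Cofan f} (hc : IsColimit c)
    {s : Finset ι} {i : ι} (hi : i ∈ s) : c.inj i ≫ esum hc s = c.inj i := by
  rw [esum, Preadditive.comp_sum, Finset.sum_eq_single i]
  · rw [← Category.assoc, inj_cproj_self, Category.id_comp]
  · intro j _ hj
    rw [← Category.assoc, inj_cproj_ne hc hj.symm, zero_comp]
  · exact fun h => (h hi).elim

theorem esum_esum {ι : Type w} {f : ι → T} {c : Cofan f} (hc : IsColimit c)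
    {s t : Finset ι} (h : s ⊆ t) : esum hc s ≫ esum hc t = esum hc s := by
  have : esum hc s ≫ esum hc t = ∑ i ∈ s, (cproj hc i ≫ c.inj i) ≫ esum hc t := by
    rw [← Preadditive.sum_comp]; rfl
  rw [this]
  refine Finset.sum_congr rfl fun i hi => ?_
  rw [Category.assoc, inj_esum hc (h hi)]

theorem esum_esum' {ι : Type w} {f : ι → T} {c : Cofan f} (hc : IsColimit c)
    {s t : Finset ι} (h : s ⊆ t) : esum hc t ≫ esum hc s = esum hc s := by
  classical
  refine Cofan.IsColimit.hom_ext hc _ _ fun i => ?_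
  by_cases hi : i ∈ t
  · rw [← Category.assoc, inj_esum hc hi]
  · have : ∀ s : Finset ι, i ∉ s → c.inj i ≫ esum hc s = 0 := by
      intro s hi
      rw [esum, Preadditive.comp_sum]
      refine Finset.sum_eq_zero fun j hj => ?_
      rw [← Category.assoc, inj_cproj_ne hc (by rintro rfl; exact hi hj), zero_comp]
    rw [← Category.assoc, this t hi, this s (fun h' => hi (h h')), zero_comp]

theorem cofanHomComparison_apply {ι : Type w} (x : T) (f : ι → T) (c : Cofan f)
    (g : Π₀ i, (x ⟶ f i)) : ∃ s : Finset ι,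
      cofanHomComparison x f c g = ∑ i ∈ s, g i ≫ c.inj i := by
  classical
  refine ⟨g.support, ?_⟩
  rw [cofanHomComparison]
  have := DFinsupp.sumAddHom_apply (fun i => AddMonoidHom.mk' (fun φ : x ⟶ f i => φ ≫ c.inj i)
    (fun φ ψ => Preadditive.add_comp _ _ _ φ ψ (c.inj i))) g
  rw [DFinsupp.sum] at this
  convert this
  rfl

theorem cofanHomComparison_single {ι : Type w} [DecidableEq ι] (x : T) (f : ι → T) (c : Cofan f)
    (j : ι) (b : x ⟶ f j) :
    cofanHomComparison x f c (DFinsupp.single j b) = b ≫ c.inj j := by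
  have := DFinsupp.sumAddHom_single (fun i => AddMonoidHom.mk' (fun φ : x ⟶ f i => φ ≫ c.inj i)
    (fun φ ψ => Preadditive.add_comp _ _ _ φ ψ (c.inj i))) j b
  rw [cofanHomComparison]
  convert this
  rfl

theorem isCompactObj_iff (x : T) : IsCompactObj.{w} x ↔
    ∀ ⦃ι : Type w⦄ (f : ι → T) (c : Cofan f) (hc : IsColimit c) (h : x ⟶ c.pt),
      ∃ s : Finset ι, h ≫ esum hc s = h := by
  classical
  constructor
  · intro H ι f c hc h
    obtain ⟨g, rfl⟩ := (H f c hc).2 h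
    obtain ⟨s, hs⟩ := cofanHomComparison_apply x f c g
    refine ⟨s, ?_⟩
    rw [hs, Preadditive.sum_comp]
    refine Finset.sum_congr rfl fun i hi => ?_
    rw [Category.assoc, inj_esum hc hi]
  · intro H ι f c hc
    have key : ∀ (g : Π₀ i, (x ⟶ f i)) (i : ι),
        cofanHomComparison x f c g ≫ cproj hc i = g i := by
      intro g i
      induction g using DFinsupp.induction with
      | h0 => simp
      | ha j b g _ _ ih =>
        rw [map_add, Preadditive.add_comp, ih, DFinsupp.add_apply]
        congr 1
        rw [cofanHomComparison_single, Category.assoc]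
        by_cases hij : j = i
        · subst hij; rw [inj_cproj_self]; simp
        · rw [inj_cproj_ne hc hij, DFinsupp.single_eq_of_ne (Ne.symm hij), comp_zero]
    constructor
    · intro g g' h
      ext i
      rw [← key, ← key, h]
    · intro h
      obtain ⟨s, hs⟩ := H f c hc h
      refine ⟨∑ i ∈ s, DFinsupp.single i (h ≫ cproj hc i), ?_⟩
      rw [map_sum]
      conv_rhs => rw [← hs, esum, Preadditive.comp_sum]
      refine Finset.sum_congr rfl fun i hi => ?_
      rw [cofanHomComparison_single, Category.assoc]

theorem IsCompactObj.eq_zero {x : T} (hx : IsCompactObj.{w} x) {ι : Type w} {f : ι → T}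
    {c : Cofan f} (hc : IsColimit c) (h : x ⟶ c.pt) (h0 : ∀ i, h ≫ cproj hc i = 0) : h = 0 := by
  obtain ⟨s, hs⟩ := (isCompactObj_iff x).1 hx f c hc h
  rw [← hs, esum, Preadditive.comp_sum]
  refine Finset.sum_eq_zero fun i _ => ?_
  rw [← Category.assoc, h0, zero_comp]

theorem IsCompactObj.exists_sum {x : T} (hx : IsCompactObj.{w} x) {ι : Type w} {f : ι → T}
    {c : Cofan f} (hc : IsColimit c) (h : x ⟶ c.pt) :
    ∃ (s : Finset ι) (g : ∀ i, x ⟶ f i), h = ∑ i ∈ s, g i ≫ c.inj i := by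
  obtain ⟨s, hs⟩ := (isCompactObj_iff x).1 hx f c hc h
  refine ⟨s, fun i => h ≫ cproj hc i, ?_⟩
  conv_lhs => rw [← hs, esum, Preadditive.comp_sum]
  simp

theorem isCompactObj_of_exists_sum {x : T}
    (H : ∀ ⦃ι : Type w⦄ (f : ι → T) (c : Cofan f) (_ : IsColimit c) (h : x ⟶ c.pt),
      ∃ (s : Finset ι) (g : ∀ i, x ⟶ f i), h = ∑ i ∈ s, g i ≫ c.inj i) : IsCompactObj.{w} x := by
  rw [isCompactObj_iff]
  intro ι f c hc h
  obtain ⟨s, g, rfl⟩ := H f c hc h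
  refine ⟨s, ?_⟩
  rw [Preadditive.sum_comp]
  refine Finset.sum_congr rfl fun i hi => ?_
  rw [Category.assoc, inj_esum hc hi]

theorem IsCompactObj.retract {x y : T} (hx : IsCompactObj.{w} x) (i : y ⟶ x) (r : x ⟶ y)
    (h : i ≫ r = 𝟙 y) : IsCompactObj.{w} y := by
  rw [isCompactObj_iff] at hx ⊢
  intro ι f c hc g
  obtain ⟨s, hs⟩ := hx f c hc (r ≫ g)
  refine ⟨s, ?_⟩
  have := congrArg (fun t => i ≫ t) hs
  simpa [reassoc_of% h] using this

theorem IsCompactObj.of_iso {x y : T} (hx : IsCompactObj.{w} x) (e : x ≅ y) :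
    IsCompactObj.{w} y := hx.retract e.inv e.hom (by simp)

end AbsCompact

section AbsCompactTri

variable {T : Type u} [Category.{v} T] [Preadditive T] [HasZeroObject T]
  [HasShift T ℤ] [∀ n : ℤ, (shiftFunctor T n).Additive] [Pretriangulated T]

noncomputable def shiftCofan {ι : Type w} {f : ι → T} (c : Cofan f) (n : ℤ) :
    Cofan (fun i => (f i)⟦n⟧) := Cofan.mk (c.pt⟦n⟧) (fun i => (c.inj i)⟦n⟧')

noncomputable def shiftCofanIsColimit {ι : Type w} {f : ι → T} {c : Cofan f} (hc : IsColimit c)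
    (n : ℤ) : IsColimit (shiftCofan c n) :=
  isColimitCofanMkObjOfIsColimit (shiftFunctor T n) f c.inj
    (hc.ofIsoColimit (Cofan.ext (Iso.refl _)))

theorem IsCompactObj.shift {x : T} (hx : IsCompactObj.{w} x) (n : ℤ) :
    IsCompactObj.{w} (x⟦n⟧) := by
  apply isCompactObj_of_exists_sum
  intro ι f c hc h
  let e := (shiftEquiv T n).unitIso.app x
  obtain ⟨s, g, hg⟩ := hx.exists_sum (shiftCofanIsColimit hc (-n)) (e.hom ≫ h⟦-n⟧')
  refine ⟨s, fun i => (shiftFunctor T (-n)).preimage (e.inv ≫ g i), ?_⟩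
  apply (shiftFunctor T (-n)).map_injective
  rw [Functor.map_sum]
  have := congrArg (fun z => e.inv ≫ z) hg
  have e0 : e.inv ≫ e.hom ≫ h⟦-n⟧' = h⟦-n⟧' := e.inv_hom_id_assoc _
  simp only [Preadditive.comp_sum] at this
  refine (e0.symm.trans this).trans (Finset.sum_congr rfl fun i _ => ?_)
  rw [Functor.map_comp, Functor.map_preimage]
  exact (Category.assoc _ _ _).symm

theorem IsCompactObj.cone {Tr : Triangle T} (h : Tr ∈ distinguishedTriangles)
    (h1 : IsCompactObj.{w} Tr.obj₁) (h2 : IsCompactObj.{w} Tr.obj₂) :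
    IsCompactObj.{w} Tr.obj₃ := by
  classical
  have h1' := h1.shift 1
  rw [isCompactObj_iff] at h1' h2 ⊢
  intro ι f c hc g
  obtain ⟨s, hs⟩ := h2 f c hc (Tr.mor₂ ≫ g)
  obtain ⟨k, hk⟩ := Triangle.yoneda_exact₃ _ h (g - g ≫ esum hc s) (by
    rw [Preadditive.comp_sub, ← Category.assoc, hs, sub_self])
  obtain ⟨t, ht⟩ := h1' f c hc k
  refine ⟨s ∪ t, ?_⟩
  have e1 : (g - g ≫ esum hc s) ≫ esum hc t = g - g ≫ esum hc s := by
    rw [hk, Category.assoc, ht]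
  have e2 := congrArg (fun z => z ≫ esum hc (s ∪ t)) e1
  simp only [Category.assoc, Preadditive.sub_comp, esum_esum hc Finset.subset_union_left,
    esum_esum hc Finset.subset_union_right] at e2
  have e3 : g ≫ esum hc (s ∪ t) = g ≫ esum hc s +
    (g ≫ esum hc t - g ≫ esum hc s ≫ esum hc t) := by rw [e2]; abel
  rw [e3]
  have e4 : (g ≫ esum hc t - g ≫ esum hc s ≫ esum hc t) = g - g ≫ esum hc s := by
    rw [← e1, Preadditive.sub_comp, Category.assoc]
  rw [e4]; abel

theorem isCompactObj_of_isZero {x : T} (hx : IsZero x) : IsCompactObj.{w} x := by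
  rw [isCompactObj_iff]
  exact fun ι f c hc h => ⟨∅, hx.eq_of_src _ _⟩

end AbsCompactTri

section AbsTel

variable {T : Type u} [Category.{v} T] [Preadditive T] [HasZeroObject T]
  [HasShift T ℤ] [∀ n : ℤ, (shiftFunctor T n).Additive] [Pretriangulated T]

section Exact

variable {X Y Z : T} {f : X ⟶ Y} {g : Y ⟶ Z} {h : Z ⟶ X⟦(1 : ℤ)⟧}

theorem ex_co2 (H : Triangle.mk f g h ∈ distinguishedTriangles) {W : T} (k : W ⟶ Y)
    (hk : k ≫ g = 0) : ∃ l : W ⟶ X, k = l ≫ f := Triangle.coyoneda_exact₂ _ H k hk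

theorem ex_co3 (H : Triangle.mk f g h ∈ distinguishedTriangles) {W : T} (k : W ⟶ Z)
    (hk : k ≫ h = 0) : ∃ l : W ⟶ Y, k = l ≫ g := Triangle.coyoneda_exact₃ _ H k hk

theorem ex_co1 (H : Triangle.mk f g h ∈ distinguishedTriangles) {W : T} (k : W ⟶ X⟦(1 : ℤ)⟧)
    (hk : k ≫ f⟦1⟧' = 0) : ∃ l : W ⟶ Z, k = l ≫ h := Triangle.coyoneda_exact₁ _ H k hk

theorem ex_co1' (H : Triangle.mk f g h ∈ distinguishedTriangles) {W : T} (k : W ⟶ X)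
    (hk : k ≫ f = 0) : ∃ l : W⟦(1 : ℤ)⟧ ⟶ Z, k⟦1⟧' = l ≫ h :=
  ex_co1 H _ (by rw [← Functor.map_comp, hk, Functor.map_zero])

theorem ex_yo2 (H : Triangle.mk f g h ∈ distinguishedTriangles) {W : T} (k : Y ⟶ W)
    (hk : f ≫ k = 0) : ∃ l : Z ⟶ W, k = g ≫ l := Triangle.yoneda_exact₂ _ H k hk

theorem ex_yo3 (H : Triangle.mk f g h ∈ distinguishedTriangles) {W : T} (k : Z ⟶ W)
    (hk : g ≫ k = 0) : ∃ l : X⟦(1 : ℤ)⟧ ⟶ W, k = h ≫ l := Triangle.yoneda_exact₃ _ H k hk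

theorem tri12 (H : Triangle.mk f g h ∈ distinguishedTriangles) : f ≫ g = 0 :=
  comp_distTriang_mor_zero₁₂ _ H

theorem tri23 (H : Triangle.mk f g h ∈ distinguishedTriangles) : g ≫ h = 0 :=
  comp_distTriang_mor_zero₂₃ _ H

theorem tri31 (H : Triangle.mk f g h ∈ distinguishedTriangles) : h ≫ f⟦1⟧' = 0 :=
  comp_distTriang_mor_zero₃₁ _ H

end Exact

theorem unshift_inj {G H X : T} (q : H ⟶ X) (n : ℤ)
    (hq : ∀ g : G⟦-n⟧ ⟶ H, g ≫ q = 0 → g = 0) (t : G ⟶ H⟦n⟧) (ht : t ≫ q⟦n⟧' = 0) : t = 0 := by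
  let e := shiftFunctorCompIsoId T n (-n) (by simp)
  have h1 : (t⟦-n⟧' ≫ e.hom.app H) ≫ q = 0 := by
    have := e.hom.naturality q
    simp only [Functor.comp_map, Functor.id_map] at this
    have h2 : (t⟦-n⟧' ≫ e.hom.app H) ≫ q = t⟦-n⟧' ≫ ((q⟦n⟧')⟦-n⟧' ≫ e.hom.app X) :=
      (Category.assoc _ _ _).trans (congrArg (fun z => t⟦-n⟧' ≫ z) this.symm)
    rw [h2, ← Category.assoc, ← Functor.map_comp, ht, Functor.map_zero, zero_comp]
  have h3 := hq _ h1
  have h4 : t⟦-n⟧' = 0 := by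
    rw [← cancel_mono (e.hom.app H), zero_comp]; exact h3
  exact (shiftFunctor T (-n)).map_injective (by rw [h4, Functor.map_zero])

theorem tel_kill {G : T} (hG : IsCompactObj.{w} G) (F : ℕ → T) (a : ∀ n, F n ⟶ F (n + 1))
    {c : Cofan (fun i : ULift.{w} ℕ => F i.down)} (hc : IsColimit c) (δ : c.pt ⟶ c.pt)
    (hδ : ∀ n, c.inj ⟨n⟩ ≫ δ = c.inj ⟨n⟩ - a n ≫ c.inj ⟨n + 1⟩)
    (h : G ⟶ c.pt) (h0 : h ≫ δ = 0) : h = 0 := by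
  have e0 : δ ≫ cproj hc ⟨0⟩ = cproj hc ⟨0⟩ := by
    refine Cofan.IsColimit.hom_ext hc _ _ fun i => ?_
    obtain ⟨i⟩ := i
    have : c.inj ⟨i + 1⟩ ≫ cproj hc ⟨0⟩ = 0 := inj_cproj_ne hc (by simp)
    rw [← Category.assoc, hδ, Preadditive.sub_comp, Category.assoc, this, comp_zero, sub_zero]
  have e1 : ∀ n, δ ≫ cproj hc ⟨n + 1⟩ = cproj hc ⟨n + 1⟩ - cproj hc ⟨n⟩ ≫ a n := by
    intro n
    refine Cofan.IsColimit.hom_ext hc _ _ fun i => ?_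
    obtain ⟨i⟩ := i
    rw [← Category.assoc, hδ, Preadditive.sub_comp, Category.assoc, Preadditive.comp_sub]
    congr 1
    by_cases hi : i = n
    · subst hi
      have h1 := inj_cproj_self hc ⟨i + 1⟩
      have h2 := inj_cproj_self hc ⟨i⟩
      rw [h1, ← Category.assoc, h2, Category.comp_id, Category.id_comp]
    · have h1 : c.inj ⟨i + 1⟩ ≫ cproj hc ⟨n + 1⟩ = 0 := inj_cproj_ne hc (by simpa using hi)
      have h2 : c.inj ⟨i⟩ ≫ cproj hc ⟨n⟩ = 0 := inj_cproj_ne hc (by simpa using hi)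
      rw [h1, ← Category.assoc, h2, comp_zero, zero_comp]
  refine hG.eq_zero hc h ?_
  rintro ⟨n⟩
  induction n with
  | zero => rw [← e0, ← Category.assoc, h0, zero_comp]
  | succ n ih =>
    have := congrArg (fun t => h ≫ t) (e1 n)
    simp only [Preadditive.comp_sub, ← Category.assoc, h0, zero_comp, ih] at this
    simpa using this.symm

theorem tel_exists [HasCoproducts.{w} T] {L : Set T} (hL : IsLocalizingSub.{w} L) (F : ℕ ⥤ T)
    (hF : ∀ n, F.obj n ∈ L) (X : T) (p : ∀ n, F.obj n ⟶ X)
    (hp : ∀ n, F.map (homOfLE (Nat.le_add_right n 1)) ≫ p (n + 1) = p n) :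
    ∃ (H : T) (q : H ⟶ X) (j : ∀ n, F.obj n ⟶ H), H ∈ L ∧ (∀ n, j n ≫ q = p n) ∧
      (∀ n m (h : n ≤ m), F.map (homOfLE h) ≫ j m = j n) ∧
      ∀ G, IsCompactObj.{w} G → ∀ g : G ⟶ H, ∃ n x, g = x ≫ j n := by
  let f := fun i : ULift.{w} ℕ => F.obj i.down
  let c : Cofan f := Cofan.mk (∐ f) (Sigma.ι f)
  have hc : IsColimit c := coproductIsCoproduct f
  let a := fun n => F.map (homOfLE (Nat.le_add_right n 1))
  let δ : c.pt ⟶ c.pt :=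
    Cofan.IsColimit.desc hc (fun i => c.inj i - a i.down ≫ c.inj ⟨i.down + 1⟩)
  have hδ : ∀ n, c.inj ⟨n⟩ ≫ δ = c.inj ⟨n⟩ - a n ≫ c.inj ⟨n + 1⟩ := fun n =>
    Cofan.IsColimit.fac hc _ _
  obtain ⟨H, g, d, hT⟩ := distinguished_cocone_triangle δ
  obtain ⟨q, hq⟩ := ex_yo2 hT
    (Cofan.IsColimit.desc hc (fun i => p i.down)) (by
      refine Cofan.IsColimit.hom_ext hc _ _ fun i => ?_
      obtain ⟨n⟩ := i
      rw [← Category.assoc, hδ, Preadditive.sub_comp, Category.assoc, Cofan.IsColimit.fac,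
        Cofan.IsColimit.fac, hp, sub_self, comp_zero])
  have hj : ∀ n m (h : n ≤ m), F.map (homOfLE h) ≫ c.inj ⟨m⟩ ≫ g = c.inj ⟨n⟩ ≫ g := by
    intro n m h
    induction m, h using Nat.le_induction with
    | base => simp
    | succ m h ih =>
      have e : δ ≫ g = 0 := comp_distTriang_mor_zero₁₂ _ hT
      have := congrArg (fun t => c.inj ⟨m⟩ ≫ t) e
      simp only [← Category.assoc, hδ, comp_zero] at this
      rw [Preadditive.sub_comp, Category.assoc, sub_eq_zero] at this
      rw [← homOfLE_comp h (Nat.le_add_right m 1), Functor.map_comp, Category.assoc]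
      rw [← this, ih]
  refine ⟨H, q, fun n => c.inj ⟨n⟩ ≫ g, ?_, ?_, ?_, ?_⟩
  · have := hL.coprod_mem f c hc (fun i => hF _)
    exact hL.cone_mem _ hT this this
  · intro n
    rw [Category.assoc, ← hq, Cofan.IsColimit.fac]
  · exact hj
  · intro G hG x
    have hx : x ≫ d = 0 := by
      refine tel_kill hG (fun n => (F.obj n)⟦(1 : ℤ)⟧) (fun n => (a n)⟦1⟧')
        (shiftCofanIsColimit hc 1) (δ⟦1⟧') ?_ (x ≫ d) ?_
      · intro n
        have := congrArg (fun t => t⟦(1 : ℤ)⟧') (hδ n)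
        simp only [Functor.map_comp, Functor.map_sub] at this
        exact this
      · have z : (x ≫ d) ≫ δ⟦(1 : ℤ)⟧' = 0 := by rw [Category.assoc, tri31 hT, comp_zero]
        exact z
    obtain ⟨y, hy⟩ := ex_co3 hT x hx
    obtain ⟨s, z, hz⟩ := hG.exists_sum hc y
    have : ∀ s : Finset (ULift.{w} ℕ), ∃ n w', (∑ i ∈ s, z i ≫ c.inj i) ≫ g =
        w' ≫ c.inj ⟨n⟩ ≫ g := by
      intro s
      induction s using Finset.induction with
      | empty => exact ⟨0, 0, by simp⟩
      | insert i s hi ih =>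
        obtain ⟨n, w', hw⟩ := ih
        obtain ⟨i⟩ := i
        refine ⟨max i n, z ⟨i⟩ ≫ F.map (homOfLE (le_max_left i n)) +
          w' ≫ F.map (homOfLE (le_max_right i n)), ?_⟩
        rw [Finset.sum_insert hi, Preadditive.add_comp, hw, Preadditive.add_comp]
        congr 1
        · rw [Category.assoc, Category.assoc]; erw [hj]
        · rw [Category.assoc, hj]
    obtain ⟨n, w', hw⟩ := this s
    exact ⟨n, w', by rw [hy, hz, hw]⟩

def locProp (L : Set T) : ObjectProperty T := fun X => X ∈ L

theorem locProp_tri {L : Set T} (hL : IsLocalizingSub.{w} L) : (locProp L).IsTriangulated where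
  exists_zero := ⟨0, isZero_zero T, hL.zero_mem⟩
  isStableUnderShiftBy n := ⟨fun X hX => hL.shift_mem n hX⟩
  ext₂' Tr h h1 h3 := ObjectProperty.le_isoClosure _ _ (hL.mem₂ Tr h h1 h3)

/-- The telescope lemma. -/
theorem tower_lemma [IsTriangulated T] [HasCoproducts.{w} T] {L : Set T}
    (hL : IsLocalizingSub.{w} L) (X : ℕ ⥤ T)
    (hX : ∀ n, (locProp L).trW (X.map (homOfLE (Nat.le_add_right n 1))))
    (𝒢 : Set T) (h𝒢 : ∀ G ∈ 𝒢, IsCompactObj.{w} G) (hsh : ∀ G ∈ 𝒢, ∀ k : ℤ, G⟦k⟧ ∈ 𝒢)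
    (hd : ∀ G ∈ 𝒢, ∀ n (g : G ⟶ X.obj n), ∃ m, ∃ h : n ≤ m, g ≫ X.map (homOfLE h) = 0) :
    ∃ (F Y : T) (a : F ⟶ X.obj 0) (b : X.obj 0 ⟶ Y) (c : Y ⟶ F⟦(1 : ℤ)⟧),
      Triangle.mk a b c ∈ distinguishedTriangles ∧ F ∈ L ∧ ∀ G ∈ 𝒢, ∀ g : G ⟶ Y, g = 0 := by
  have := locProp_tri hL
  have hX' : ∀ n, (locProp L).trW (X.map (homOfLE (Nat.zero_le n))) := by
    intro n
    induction n with
    | zero =>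
      have : X.map (homOfLE (Nat.zero_le 0)) = 𝟙 _ := X.map_id 0
      rw [this]; exact MorphismProperty.id_mem _ _
    | succ n ih =>
      rw [← homOfLE_comp (Nat.zero_le n) (Nat.le_add_right n 1), X.map_comp]
      exact MorphismProperty.comp_mem _ _ _ ih (hX n)
  simp only [ObjectProperty.trW_iff'] at hX'
  choose F p d hT hF using hX'
  have : ∀ n, ∃ a : F n ⟶ F (n + 1), p n = a ≫ p (n + 1) ∧
      d n ≫ a⟦(1 : ℤ)⟧' = X.map (homOfLE (Nat.le_add_right n 1)) ≫ d (n + 1) := by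
    intro n
    obtain ⟨a, h1, h2⟩ := complete_distinguished_triangle_morphism₁ _ _ (hT n) (hT (n + 1)) (𝟙 _)
      (X.map (homOfLE (Nat.le_add_right n 1))) (by
        dsimp [Triangle.mk]; rw [← X.map_comp, homOfLE_comp, Category.id_comp])
    exact ⟨a, (Category.comp_id _).symm.trans h1, h2⟩
  choose a ha1 ha2 using this
  obtain ⟨FF, hFF0, hF1⟩ : ∃ FF : ℕ ⥤ T, ∃ e : ∀ n, FF.obj n ≅ F n, ∀ n,
      FF.map (homOfLE (Nat.le_add_right n 1)) ≫ (e (n + 1)).hom = (e n).hom ≫ a n := by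
    refine ⟨Functor.ofSequence a, fun n => Iso.refl _, fun n => ?_⟩
    rw [Functor.ofSequence_map_homOfLE_succ]
    exact (Category.comp_id _).trans (Category.id_comp _).symm
  obtain ⟨H, q, j, hH, hjq, hjj, hcomp⟩ := tel_exists hL FF
    (fun n => hL.mem_of_iso (hFF0 n).symm (hF n)) (X.obj 0) (fun n => (hFF0 n).hom ≫ p n) (by
    intro n; rw [← Category.assoc, hF1, Category.assoc, ← ha1])
  have hpp : ∀ n m (h : n ≤ m), (d n ≫ (hFF0 n).inv⟦(1 : ℤ)⟧') ≫ (FF.map (homOfLE h))⟦(1 : ℤ)⟧' =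
      X.map (homOfLE h) ≫ d m ≫ (hFF0 m).inv⟦(1 : ℤ)⟧' := by
    intro n m h
    induction m, h using Nat.le_induction with
    | base => simp
    | succ m h ih =>
      have e1 : (hFF0 m).inv ≫ FF.map (homOfLE (Nat.le_add_right m 1)) =
          a m ≫ (hFF0 (m + 1)).inv := by
        rw [Iso.inv_comp_eq, ← Category.assoc, Iso.eq_comp_inv, hF1]
      rw [← homOfLE_comp h (Nat.le_add_right m 1), Functor.map_comp, Functor.map_comp,
        ← Category.assoc, ih, Functor.map_comp, Category.assoc, Category.assoc, Category.assoc,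
        ← Functor.map_comp, e1, Functor.map_comp]
      rw [← Category.assoc (d m), ha2, Category.assoc]
  -- injectivity
  have hinj : ∀ G ∈ 𝒢, ∀ g : G ⟶ H, g ≫ q = 0 → g = 0 := by
    intro G hG g hg
    obtain ⟨n, x, rfl⟩ := hcomp G (h𝒢 G hG) g
    rw [Category.assoc, hjq, ← Category.assoc] at hg
    obtain ⟨y, hy⟩ := ex_co1' (hT n) _ hg
    obtain ⟨m, hnm, hm⟩ := hd _ (hsh G hG 1) n y
    have : x ≫ FF.map (homOfLE hnm) = 0 := by
      apply (shiftFunctor T (1 : ℤ)).map_injective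
      rw [Functor.map_comp, Functor.map_zero]
      have e2 : x⟦(1 : ℤ)⟧' = y ≫ d n ≫ (hFF0 n).inv⟦(1 : ℤ)⟧' := by
        rw [← Category.assoc, ← hy, ← Functor.map_comp]; simp
      rw [e2, Category.assoc, hpp, ← Category.assoc, hm, zero_comp]
    rw [← hjj n m hnm, ← Category.assoc, this, zero_comp]
  obtain ⟨Y, b, e, hY⟩ := distinguished_cocone_triangle q
  refine ⟨H, Y, q, b, e, hY, hH, ?_⟩
  intro G hG g
  have h1 : g ≫ e = 0 := unshift_inj q 1 (hinj _ (hsh G hG (-1))) _ (by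
    rw [Category.assoc, tri31 hY, comp_zero])
  obtain ⟨l, rfl⟩ := ex_co3 hY g h1
  obtain ⟨m, hm, hl⟩ := hd G hG 0 l
  obtain ⟨l', hl'⟩ := ex_co2 (hT m) l hl
  have : l = (l' ≫ (hFF0 m).inv ≫ j m) ≫ q := by
    rw [Category.assoc, Category.assoc, hjq, Iso.inv_hom_id_assoc, hl']
  rw [this, Category.assoc, tri12 hY, comp_zero]

end AbsTel

section AbsOrth

variable {T : Type u} [Category.{v} T] [Preadditive T] [HasZeroObject T]
  [HasShift T ℤ] [∀ n : ℤ, (shiftFunctor T n).Additive] [Pretriangulated T]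

def Orth (X Y : T) : Prop := ∀ (k : ℤ) (g : X⟦k⟧ ⟶ Y), g = 0

theorem shift_hom_zero {X Y : T} (k l m : ℤ) (hm : k - l = m)
    (H : ∀ g : X⟦m⟧ ⟶ Y, g = 0) (g : X⟦k⟧ ⟶ Y⟦l⟧) : g = 0 := by
  let e := (shiftFunctorAdd' T k (-l) m (by lia)).app X
  let e' := shiftFunctorCompIsoId T l (-l) (by simp)
  have h := H (e.hom ≫ g⟦-l⟧' ≫ e'.hom.app Y)
  apply (shiftFunctor T (-l)).map_injective
  rw [Functor.map_zero, ← cancel_mono (e'.hom.app Y), ← cancel_epi e.hom]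
  refine h.trans ?_
  rw [zero_comp, comp_zero]

theorem hom_zero_of_shift {X Y : T} (k l m : ℤ) (hm : k - l = m)
    (H : ∀ g : X⟦k⟧ ⟶ Y⟦l⟧, g = 0) (g : X⟦m⟧ ⟶ Y) : g = 0 := by
  let e := (shiftFunctorAdd' T m l k (by lia)).app X
  have h := H (e.hom ≫ g⟦l⟧')
  apply (shiftFunctor T l).map_injective
  rw [Functor.map_zero, ← cancel_epi e.hom]
  refine h.trans ?_
  rw [comp_zero]

theorem Orth.eq_zero {X Y : T} (h : Orth X Y) (g : X ⟶ Y) : g = 0 := by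
  have := h 0 ((shiftFunctorZero T ℤ).hom.app X ≫ g)
  rw [← cancel_epi ((shiftFunctorZero T ℤ).hom.app X), comp_zero]
  exact this

theorem Orth.shift {X Y : T} (h : Orth X Y) (k l : ℤ) : Orth (X⟦k⟧) (Y⟦l⟧) := by
  intro n
  apply shift_hom_zero n l (n - l) rfl
  intro g
  let e := (shiftFunctorAdd' T k (n - l) (k + (n - l)) rfl).app X
  have := h _ (e.hom ≫ g)
  rw [← cancel_epi e.hom, comp_zero]
  exact this

theorem Orth.zero_shift {X Y : T} (h : Orth X Y) (l : ℤ) (g : X ⟶ Y⟦l⟧) : g = 0 := by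
  have : Orth X (Y⟦l⟧) := fun n => shift_hom_zero n l _ rfl (h _)
  exact this.eq_zero g

theorem Orth.of_iso {X X' Y Y' : T} (h : Orth X Y) (e : X ≅ X') (e' : Y ≅ Y') : Orth X' Y' := by
  intro k g
  have := h k (e.hom⟦k⟧' ≫ g ≫ e'.inv)
  rw [← cancel_mono e'.inv, ← cancel_epi (e.hom⟦k⟧'), this]
  simp

theorem orth_of_shift_src {X Y : T} (n : ℤ) (h : Orth (X⟦n⟧) Y) : Orth X Y :=
  (h.shift (-n) 0).of_iso ((shiftFunctorCompIsoId T n (-n) (by simp)).app X)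
    ((shiftFunctorZero T ℤ).app Y)

theorem orth_of_shift_tgt {X Y : T} (n : ℤ) (h : Orth X (Y⟦n⟧)) : Orth X Y :=
  (h.shift 0 (-n)).of_iso ((shiftFunctorZero T ℤ).app X)
    ((shiftFunctorCompIsoId T n (-n) (by simp)).app Y)

theorem orth_of_forall {X Y : T} (h : ∀ k : ℤ, ∀ g : X ⟶ Y⟦k⟧, g = 0) : Orth X Y := by
  intro k
  refine hom_zero_of_shift 0 (-k) k (by lia) ?_
  intro g
  rw [← cancel_epi ((shiftFunctorZero T ℤ).inv.app X), comp_zero]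
  exact h _ _

theorem Orth.isZero {X : T} (h : Orth X X) : IsZero X := by
  rw [IsZero.iff_id_eq_zero]; exact h.eq_zero _

/-- the objects left orthogonal to `Y` form a localizing subcategory -/
theorem orth_isLocalizing (Y : T) : IsLocalizingSub.{w} {X : T | Orth X Y} where
  zero_mem := orth_of_forall fun k g => (isZero_zero T).eq_of_src _ _
  mem_of_iso e hx := hx.of_iso e (Iso.refl _)
  shift_mem n X hx := (hx.shift n 0).of_iso (Iso.refl _) ((shiftFunctorZero T ℤ).app Y)
  cone_mem Tr h h1 h2 := by
    refine orth_of_forall fun k g => ?_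
    obtain ⟨l, rfl⟩ := Triangle.yoneda_exact₃ _ h g (h2.zero_shift k _)
    have : Orth (Tr.obj₁⟦(1 : ℤ)⟧) (Y⟦k⟧) := h1.shift 1 k
    rw [this.eq_zero l, comp_zero]
  coprod_mem f c hc h := by
    refine orth_of_forall fun k g => ?_
    refine Cofan.IsColimit.hom_ext hc _ _ fun i => ?_
    rw [comp_zero]
    exact (h i).zero_shift k _

theorem orth_loc {C X Y : T} (h : Orth C Y) (hX : X ∈ Loc.{w} {C}) : Orth X Y :=
  loc_singleton_le (orth_isLocalizing.{w} Y) h hX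

def SmallHom (X : T) : Prop := ∀ Y : T, Small.{w} (X ⟶ Y)

theorem smallHom_isLocalizing : IsLocalizingSub.{w} {X : T | SmallHom.{w} X} where
  zero_mem := fun Y => by
    have : Subsingleton ((0 : T) ⟶ Y) := ⟨fun a b => (isZero_zero T).eq_of_src a b⟩
    infer_instance
  mem_of_iso {x y} e hx := fun Y => by
    have := hx Y
    exact small_of_injective (f := fun g : y ⟶ Y => e.hom ≫ g)
      (fun a b h => by simpa using h)
  shift_mem n X hx := fun Y => by
    have : Small.{w} ((𝟭 T).obj X ⟶ Y⟦-n⟧) := hx (Y⟦-n⟧)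
    exact small_of_injective (f := fun g : X⟦n⟧ ⟶ Y =>
      ((shiftFunctorCompIsoId T n (-n) (by simp)).inv.app X) ≫ g⟦-n⟧')
      (fun a b h => (shiftFunctor T (-n)).map_injective (by
        exact (cancel_epi ((shiftFunctorCompIsoId T n (-n) (by simp)).inv.app X)).1 h))
  cone_mem Tr h h1 h2 := fun W => by
    classical
    have hs1 : Small.{w} (Tr.obj₁⟦(1 : ℤ)⟧ ⟶ W) := by
      have : Small.{w} ((𝟭 T).obj Tr.obj₁ ⟶ W⟦-1⟧) := h1 (W⟦-1⟧)
      exact small_of_injective (f := fun g : Tr.obj₁⟦(1 : ℤ)⟧ ⟶ W =>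
        ((shiftFunctorCompIsoId T (1 : ℤ) (-1) (by simp)).inv.app Tr.obj₁) ≫ g⟦-1⟧')
        (fun a b h => (shiftFunctor T (-1)).map_injective (by
          exact (cancel_epi
            ((shiftFunctorCompIsoId T (1 : ℤ) (-1) (by simp)).inv.app Tr.obj₁)).1 h))
    have hs2 := h2 W
    let s : (Tr.obj₂ ⟶ W) → (Tr.obj₃ ⟶ W) := fun y =>
      if hy : ∃ z : Tr.obj₃ ⟶ W, y = Tr.mor₂ ≫ z then hy.choose else 0
    refine small_of_surjective (f := fun p : (Tr.obj₂ ⟶ W) × (Tr.obj₁⟦(1 : ℤ)⟧ ⟶ W) =>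
      s p.1 + Tr.mor₃ ≫ p.2) ?_
    intro z
    have hy : ∃ z' : Tr.obj₃ ⟶ W, Tr.mor₂ ≫ z = Tr.mor₂ ≫ z' := ⟨z, rfl⟩
    have hsy : Tr.mor₂ ≫ s (Tr.mor₂ ≫ z) = Tr.mor₂ ≫ z := by
      simp only [s]
      rw [dif_pos hy]
      exact hy.choose_spec.symm
    obtain ⟨l, hl⟩ := Triangle.yoneda_exact₃ _ h (z - s (Tr.mor₂ ≫ z)) (by
      rw [Preadditive.comp_sub, hsy, sub_self])
    refine ⟨(Tr.mor₂ ≫ z, l), ?_⟩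
    dsimp only
    rw [← hl]; abel
  coprod_mem {ι} f c hc h := fun Y => by
    have := fun i => h i Y
    exact small_of_injective (f := fun g : c.pt ⟶ Y => fun i => c.inj i ≫ g)
      (fun a b h => Cofan.IsColimit.hom_ext hc _ _ fun i => congrFun h i)

theorem killing_step [HasCoproducts.{w} T] (C : T) (hS : SmallHom.{w} C) (X : T) :
    ∃ (X' : T) (φ : X ⟶ X'), (locProp (Loc.{w} {C})).trW φ ∧
      ∀ (k : ℤ) (g : C⟦k⟧ ⟶ X), g ≫ φ = 0 := by
  have hs : ∀ k : ℤ, Small.{w} (C⟦k⟧ ⟶ X) := fun k =>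
    (smallHom_isLocalizing.{w} (T := T)).shift_mem k hS X
  let ι : Type w := Σ k : ℤ, Shrink.{w} (C⟦k⟧ ⟶ X)
  let f : ι → T := fun i => C⟦i.1⟧
  let ψ : ∐ f ⟶ X := Limits.Sigma.desc (fun i => (equivShrink _).symm i.2)
  obtain ⟨X', φ, d, hT⟩ := distinguished_cocone_triangle ψ
  have := locProp_tri (loc_isLocalizing.{w} {C})
  refine ⟨X', φ, ObjectProperty.trW.mk' _ hT ?_, ?_⟩
  · exact (loc_isLocalizing.{w} {C}).coprod_mem f _ (coproductIsCoproduct f)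
      (fun i => (loc_isLocalizing.{w} {C}).shift_mem _ (mem_loc_self C))
  · intro k g
    have : g = Sigma.ι f ⟨k, equivShrink _ g⟩ ≫ ψ := by
      refine Eq.symm ((Limits.Sigma.ι_desc _ _).trans ?_)
      exact Equiv.symm_apply_apply _ _
    rw [this, Category.assoc, tri12 hT, comp_zero]

theorem bousfield [IsTriangulated T] [HasCoproducts.{w} T] {C : T} (hC : IsCompactObj.{w} C)
    (hS : SmallHom.{w} C) (X : T) :
    ∃ (F Y : T) (a : F ⟶ X) (b : X ⟶ Y) (c : Y ⟶ F⟦(1 : ℤ)⟧),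
      Triangle.mk a b c ∈ distinguishedTriangles ∧ F ∈ Loc.{w} {C} ∧ Orth C Y := by
  choose N φ h1 h2 using killing_step C hS
  let Z : ℕ → T := fun n => Nat.rec X (fun _ Y => N Y) n
  let ψ : ∀ n, Z n ⟶ Z (n + 1) := fun n => φ (Z n)
  obtain ⟨F, Y, a, b, c, hT, hF, hY⟩ := tower_lemma (loc_isLocalizing.{w} {C})
    (Functor.ofSequence ψ) (fun n => by
      rw [Functor.ofSequence_map_homOfLE_succ]; exact h1 _) {G | ∃ k : ℤ, Nonempty (G ≅ C⟦k⟧)}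
      (fun G ⟨k, ⟨e⟩⟩ => (hC.shift k).of_iso e.symm)
      (fun G ⟨k, ⟨e⟩⟩ m => ⟨k + m, ⟨(shiftFunctor T m).mapIso e ≪≫
        ((shiftFunctorAdd T k m).app C).symm⟩⟩)
      (fun G ⟨k, ⟨e⟩⟩ n g => ⟨n + 1, Nat.le_add_right n 1, by
        have z : ∀ g : G ⟶ Z n, g ≫ ψ n = 0 := fun g => by
          rw [← cancel_epi e.inv, comp_zero, ← Category.assoc]
          exact h2 _ k _
        rw [Functor.ofSequence_map_homOfLE_succ]
        exact z g⟩)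
  exact ⟨F, Y, a, b, c, hT, hF, fun k g => hY _ ⟨k, ⟨Iso.refl _⟩⟩ g⟩

theorem mem_loc_iff [IsTriangulated T] [HasCoproducts.{w} T] {C : T} (hC : IsCompactObj.{w} C)
    (hS : SmallHom.{w} C) (X : T) : X ∈ Loc.{w} {C} ↔ ∀ Y, Orth C Y → Orth X Y := by
  constructor
  · intro hX Y hY
    exact orth_loc hY hX
  · intro h
    obtain ⟨F, Y, a, b, c, hT, hF, hY⟩ := bousfield hC hS X
    have hb : b = 0 := (h Y hY).eq_zero b
    obtain ⟨l, hl⟩ := ex_yo3 hT (𝟙 Y) (by rw [hb, zero_comp])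
    have h2 : Orth (F⟦(1 : ℤ)⟧) Y := (orth_isLocalizing.{w} Y).shift_mem 1 (orth_loc hY hF)
    have hY0 : IsZero Y := by
      rw [IsZero.iff_id_eq_zero, hl, h2.eq_zero l, comp_zero]
    exact (loc_isLocalizing.{w} {C}).mem₂ _ hT hF ((loc_isLocalizing.{w} {C}).isZero_mem hY0)

theorem loc_eq_of_orth [IsTriangulated T] [HasCoproducts.{w} T] {C D : T}
    (hC : IsCompactObj.{w} C) (hS : SmallHom.{w} C) (hD : IsCompactObj.{w} D)
    (hS' : SmallHom.{w} D) (h : ∀ Y, Orth C Y ↔ Orth D Y) : Loc.{w} {C} = Loc.{w} {D} := by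
  apply Set.Subset.antisymm
  · exact loc_singleton_le (loc_isLocalizing _) ((mem_loc_iff hD hS' C).2 fun Y => (h Y).2)
  · exact loc_singleton_le (loc_isLocalizing _) ((mem_loc_iff hC hS D).2 fun Y => (h Y).1)

end AbsOrth

section AbsNeeman

variable {T : Type u} [Category.{v} T] [Preadditive T] [HasZeroObject T]
  [HasShift T ℤ] [∀ n : ℤ, (shiftFunctor T n).Additive] [Pretriangulated T]

structure IsTriSub (S : Set T) : Prop where
  zero_mem : (0 : T) ∈ S
  mem_of_iso : ∀ {x y : T}, (x ≅ y) → x ∈ S → y ∈ S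
  shift_mem : ∀ (n : ℤ) {x : T}, x ∈ S → x⟦n⟧ ∈ S
  cone_mem : ∀ (Tr : Triangle T), Tr ∈ distinguishedTriangles →
    Tr.obj₁ ∈ S → Tr.obj₂ ∈ S → Tr.obj₃ ∈ S

theorem IsTriSub.mem₂ {S : Set T} (hS : IsTriSub S) (Tr : Triangle T)
    (h : Tr ∈ distinguishedTriangles) (h1 : Tr.obj₁ ∈ S) (h3 : Tr.obj₃ ∈ S) : Tr.obj₂ ∈ S :=
  hS.cone_mem _ (inv_rot_of_distTriang _ h) (hS.shift_mem (-1) h3) h1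

theorem IsCompactObj.unshift {X : T} (n : ℤ)
    (h : IsCompactObj.{w} (X⟦n⟧)) : IsCompactObj.{w} X :=
  (h.shift (-n)).of_iso ((shiftEquiv T n).unitIso.app X).symm

def Fac (P : Set T) (X : T) : Prop :=
  ∀ (C : T), IsCompactObj.{w} C → ∀ g : C ⟶ X, ∃ (Q : T) (_ : Q ∈ P) (a : C ⟶ Q) (b : Q ⟶ X),
    g = a ≫ b

theorem fac_add {P : Set T} (hP : IsTriSub P) {C X : T} {g g' : C ⟶ X}
    (h : ∃ (Q : T) (_ : Q ∈ P) (a : C ⟶ Q) (b : Q ⟶ X), g = a ≫ b)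
    (h' : ∃ (Q : T) (_ : Q ∈ P) (a : C ⟶ Q) (b : Q ⟶ X), g' = a ≫ b) :
    ∃ (Q : T) (_ : Q ∈ P) (a : C ⟶ Q) (b : Q ⟶ X), g + g' = a ≫ b := by
  obtain ⟨Q, hQ, a, b, rfl⟩ := h
  obtain ⟨Q', hQ', a', b', rfl⟩ := h'
  exact ⟨Q ⊞ Q', hP.mem₂ _ (binaryBiproductTriangle_distinguished Q Q') hQ hQ',
    biprod.lift a a', biprod.desc b b', by simp⟩

theorem fac_ext {P : Set T} (hP : IsTriSub P) (hPc : ∀ X ∈ P, IsCompactObj.{w} X)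
    {X' X X'' : T} {i : X' ⟶ X} {p : X ⟶ X''} {d : X'' ⟶ X'⟦(1 : ℤ)⟧}
    (H : Triangle.mk i p d ∈ distinguishedTriangles) (h1 : Fac.{w} P X') (h3 : Fac.{w} P X'') :
    Fac.{w} P X := by
  intro C hC g
  obtain ⟨P2, hP2, a2, b2, e2⟩ := h3 C hC (g ≫ p)
  obtain ⟨C1, c1, w1, HC⟩ := distinguished_cocone_triangle₁ a2
  have hC1 : IsCompactObj.{w} C1 := by
    have := IsCompactObj.cone (rot_of_distTriang _ HC) hC (hPc _ hP2)
    exact IsCompactObj.unshift 1 this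
  obtain ⟨y, hy1, hy2⟩ := complete_distinguished_triangle_morphism₁ _ _ HC H g b2 e2.symm
  obtain ⟨P1, hP1, a1, b1, rfl⟩ := h1 C1 hC1 y
  obtain ⟨Q, u, v, HQ⟩ := distinguished_cocone_triangle₂ (w1 ≫ a1⟦(1 : ℤ)⟧')
  have hQ : Q ∈ P := hP.mem₂ _ HQ hP1 hP2
  obtain ⟨α, hα1, hα2⟩ := complete_distinguished_triangle_morphism₂ _ _ HC HQ a1 (𝟙 P2)
    (Category.id_comp _).symm
  obtain ⟨β, hβ1, hβ2⟩ := complete_distinguished_triangle_morphism₂ _ _ HQ H b1 b2 (by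
    refine Eq.trans ?_ hy2
    refine (Category.assoc _ _ _).trans ?_
    exact congrArg (fun z => w1 ≫ z) ((shiftFunctor T (1 : ℤ)).map_comp a1 b1).symm)
  change c1 ≫ g = (a1 ≫ b1) ≫ i at hy1
  change C ⟶ Q at α
  change Q ⟶ X at β
  change c1 ≫ α = a1 ≫ u at hα1
  change a2 ≫ 𝟙 P2 = α ≫ v at hα2
  change u ≫ β = b1 ≫ i at hβ1
  obtain ⟨t, ht⟩ := ex_yo2 HC (α ≫ β - g) (by
    rw [Preadditive.comp_sub, hy1, ← Category.assoc, hα1, Category.assoc, hβ1, Category.assoc,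
      sub_self])
  rw [Category.comp_id] at hα2
  refine ⟨Q, hQ, α, β - v ≫ t, ?_⟩
  rw [Preadditive.comp_sub, ← Category.assoc, ← hα2, ← ht, sub_sub_cancel]

theorem fac_isLocalizing {P : Set T} (hP : IsTriSub P) (hPc : ∀ X ∈ P, IsCompactObj.{w} X) :
    IsLocalizingSub.{w} {X : T | Fac.{w} P X} := by
  have hsh : ∀ (n : ℤ) {X : T}, Fac.{w} P X → Fac.{w} P (X⟦n⟧) := by
    intro n X hX C hC g
    let e := shiftFunctorCompIsoId T (-n) n (by simp)
    obtain ⟨h, hh⟩ := (shiftFunctor T n).map_surjective (e.hom.app C ≫ g)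
    obtain ⟨Q, hQ, a, b, rfl⟩ := hX _ (hC.shift (-n)) h
    refine ⟨_, hP.shift_mem n hQ, e.inv.app C ≫ a⟦n⟧', b⟦n⟧', ?_⟩
    have : (e.inv.app C ≫ a⟦n⟧') ≫ b⟦n⟧' = e.inv.app C ≫ (a ≫ b)⟦n⟧' := by
      rw [Functor.map_comp, Category.assoc]
    rw [this, hh]
    have z := e.inv_hom_id_app_assoc C g
    exact z.symm
  exact
  { zero_mem := fun C hC g => ⟨0, hP.zero_mem, 0, 0, (isZero_zero T).eq_of_tgt _ _⟩
    mem_of_iso := fun {x y} e hx C hC g => by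
      obtain ⟨Q, hQ, a, b, h⟩ := hx C hC (g ≫ e.inv)
      exact ⟨Q, hQ, a, b ≫ e.hom, by rw [← Category.assoc, ← h]; simp⟩
    shift_mem := fun n X hX => hsh n hX
    cone_mem := fun Tr h h1 h2 =>
      fac_ext hP hPc (rot_of_distTriang _ h) h2 (hsh 1 h1)
    coprod_mem := fun {ι} f c hc h C hC g => by
      classical
      obtain ⟨s, g', rfl⟩ := hC.exists_sum hc g
      induction s using Finset.induction_on with
      | empty => exact ⟨0, hP.zero_mem, 0, 0, by simp⟩
      | insert i s his ih =>
        rw [Finset.sum_insert his]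
        refine fac_add hP ?_ ih
        obtain ⟨Q, hQ, a, b, h⟩ := h i C hC (g' i)
        exact ⟨Q, hQ, a, b ≫ c.inj i, by rw [h, Category.assoc]⟩ }

theorem neeman [IsTriangulated T] [HasCoproducts.{w} T] (hS : ∀ X : T, SmallHom.{w} X)
    {P : Set T} (hP : IsTriSub P) (hPc : ∀ X ∈ P, IsCompactObj.{w} X)
    (G : T) (hG : G ∈ P) (hGen : ∀ X : T, X ∈ Loc.{w} {G}) (C : T) (hC : IsCompactObj.{w} C) :
    ∃ Z ∈ P, Loc.{w} {C} = Loc.{w} {Z} := by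
  have hfac : Fac.{w} P C := loc_singleton_le (fac_isLocalizing hP hPc)
    (fun C hC g => ⟨G, hG, g, 𝟙 _, by simp⟩) (hGen C)
  obtain ⟨Q, hQ, i, r, h1⟩ := hfac C hC (𝟙 C)
  obtain ⟨Z, q, w1, HZ⟩ := distinguished_cocone_triangle (𝟙 Q - r ≫ i)
  have hZ : Z ∈ P := hP.cone_mem _ HZ hQ hQ
  refine ⟨Z, hZ, loc_eq_of_orth hC (hS _) (hPc _ hZ) (hS _) fun Y => ⟨?_, ?_⟩⟩
  · intro hY
    refine orth_of_forall fun k g => ?_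
    have e1 : q ≫ g = 0 := by
      have : q ≫ g = r ≫ (i ≫ q ≫ g) + (𝟙 Q - r ≫ i) ≫ q ≫ g := by
        rw [Preadditive.sub_comp]; simp
      rw [this, hY.zero_shift k (i ≫ q ≫ g), ← Category.assoc _ q g, tri12 HZ]; simp
    obtain ⟨h, rfl⟩ := ex_yo3 HZ g e1
    have e2 : h = (𝟙 Q - r ≫ i)⟦(1 : ℤ)⟧' ≫ h + r⟦(1 : ℤ)⟧' ≫ i⟦(1 : ℤ)⟧' ≫ h := by
      rw [Functor.map_sub, Preadditive.sub_comp]; simp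
    have e3 : i⟦(1 : ℤ)⟧' ≫ h = 0 := (hY.shift 1 k).eq_zero _
    rw [e2, e3, comp_zero, add_zero, ← Category.assoc, tri31 HZ, zero_comp]
  · intro hY
    obtain ⟨t, ht⟩ := ex_yo2 HZ r (by
      rw [Preadditive.sub_comp, Category.assoc, ← h1]; simp)
    refine orth_of_forall fun k g => ?_
    have : g = i ≫ q ≫ (t ≫ g) := by
      rw [← Category.assoc q, ← ht, ← Category.assoc, ← h1, Category.id_comp]
    rw [this, hY.zero_shift k (t ≫ g)]; simp

end AbsNeeman

section CoprodCx

variable {C : Type u} [Category.{v} C] [Abelian C]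
variable {ι : Type w}

noncomputable def bigCx (K : ι → CochainComplex C ℤ) : CochainComplex (Discrete ι ⥤ C) ℤ where
  X n := Discrete.functor (fun i => (K i).X n)
  d n m := Discrete.natTrans (fun i => (K i.as).d n m)
  shape n m h := by
    ext i
    exact (K i.as).shape n m h
  d_comp_d' n m p _ _ := by
    ext i
    exact (K i.as).d_comp_d n m p

noncomputable def bigMap {K L : ι → CochainComplex C ℤ} (s : ∀ i, K i ⟶ L i) :
    bigCx K ⟶ bigCx L where
  f n := Discrete.natTrans (fun i => (s i.as).f n)
  comm' n m _ := by
    ext i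
    exact (s i.as).comm n m

theorem bigMap_quasiIso {K L : ι → CochainComplex C ℤ} (s : ∀ i, K i ⟶ L i)
    (hs : ∀ i, QuasiIso (s i)) : QuasiIso (bigMap s) := by
  rw [quasiIso_iff]
  intro n
  rw [quasiIsoAt_iff]
  have γ : ShortComplex.LeftHomologyMapData
    ((HomologicalComplex.shortComplexFunctor (Discrete ι ⥤ C) _ n).map (bigMap s))
      (ShortComplex.leftHomologyData _) (ShortComplex.leftHomologyData _) := default
  rw [γ.quasiIso_iff]
  rw [NatTrans.isIso_iff_isIso_app]
  intro i
  have h2 := (hs i.as).quasiIsoAt n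
  rw [quasiIsoAt_iff] at h2
  have := (γ.map ((evaluation (Discrete ι) C).obj i)).quasiIso_iff.1 h2
  exact this

variable [HasCoproductsOfShape ι C]

noncomputable def coprodCx (K : ι → CochainComplex C ℤ) : CochainComplex C ℤ :=
  ((colim : (Discrete ι ⥤ C) ⥤ C).mapHomologicalComplex _).obj (bigCx K)

noncomputable def ccInj (K : ι → CochainComplex C ℤ) (i : ι) : K i ⟶ coprodCx K where
  f n := colimit.ι (Discrete.functor (fun i => (K i).X n)) ⟨i⟩
  comm' n m _ := (ι_colimMap ((bigCx K).d n m) ⟨i⟩)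

theorem cc_hom_ext_f (K : ι → CochainComplex C ℤ) {n : ℤ} {Y : C} {g h : (coprodCx K).X n ⟶ Y}
    (H : ∀ i, (ccInj K i).f n ≫ g = (ccInj K i).f n ≫ h) : g = h := by
  refine colimit.hom_ext (F := Discrete.functor (fun i => (K i).X n)) ?_
  rintro ⟨i⟩
  exact H i

noncomputable def ccDescF (K : ι → CochainComplex C ℤ) {n : ℤ} {Y : C} (g : ∀ i, (K i).X n ⟶ Y) :
    (coprodCx K).X n ⟶ Y :=
  Limits.Sigma.desc g

theorem ccInj_descF (K : ι → CochainComplex C ℤ) {n : ℤ} {Y : C} (g : ∀ i, (K i).X n ⟶ Y) (i : ι) :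
    (ccInj K i).f n ≫ ccDescF K g = g i :=
  Limits.Sigma.ι_desc g i

theorem cc_hom_ext (K : ι → CochainComplex C ℤ) {Y : CochainComplex C ℤ} {g h : coprodCx K ⟶ Y}
    (H : ∀ i, ccInj K i ≫ g = ccInj K i ≫ h) : g = h := by
  ext n
  refine cc_hom_ext_f K fun i => ?_
  have := congrArg (fun z => z.f n) (H i)
  exact this

noncomputable def ccDesc (K : ι → CochainComplex C ℤ) {Y : CochainComplex C ℤ}
    (g : ∀ i, K i ⟶ Y) : coprodCx K ⟶ Y where
  f n := ccDescF K (fun i => (g i).f n)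
  comm' n m _ := by
    refine cc_hom_ext_f K fun i => ?_
    rw [← Category.assoc, ccInj_descF, ← Category.assoc, (ccInj K i).comm, Category.assoc,
      ccInj_descF, (g i).comm]

theorem ccInj_desc (K : ι → CochainComplex C ℤ) {Y : CochainComplex C ℤ}
    (g : ∀ i, K i ⟶ Y) (i : ι) : ccInj K i ≫ ccDesc K g = g i := by
  ext n
  exact ccInj_descF K _ i

noncomputable def ccMap {K L : ι → CochainComplex C ℤ} (s : ∀ i, K i ⟶ L i) :
    coprodCx K ⟶ coprodCx L :=
  ((colim : (Discrete ι ⥤ C) ⥤ C).mapHomologicalComplex _).map (bigMap s)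

theorem ccInj_map {K L : ι → CochainComplex C ℤ} (s : ∀ i, K i ⟶ L i) (i : ι) :
    ccInj K i ≫ ccMap s = s i ≫ ccInj L i := by
  ext n
  exact ι_colimMap ((bigMap s).f n) ⟨i⟩

theorem ccMap_quasiIso [HasExactColimitsOfShape (Discrete ι) C]
    {K L : ι → CochainComplex C ℤ} (s : ∀ i, K i ⟶ L i)
    (hs : ∀ i, QuasiIso (s i)) : QuasiIso (ccMap s) := by
  have := bigMap_quasiIso s hs
  have : (colim : (Discrete ι ⥤ C) ⥤ C).PreservesHomology := inferInstance
  exact HomologicalComplex.quasiIso_map_of_preservesHomology (bigMap s) colim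

noncomputable def ccHomotopy (K : ι → CochainComplex C ℤ) {Y : CochainComplex C ℤ}
    (g : coprodCx K ⟶ Y) (h : ∀ i, Homotopy (ccInj K i ≫ g) 0) : Homotopy g 0 where
  hom n m := ccDescF K (fun i => (h i).hom n m)
  zero n m hnm := by
    refine cc_hom_ext_f K fun i => ?_
    rw [ccInj_descF, (h i).zero n m hnm, comp_zero]
  comm n := by
    refine cc_hom_ext_f K fun i => ?_
    have := (h i).comm n
    rw [HomologicalComplex.comp_f] at this
    rw [this]
    simp only [Preadditive.comp_add]
    congr 1
    congr 1
    · rw [dNext_eq (h i).hom (show (ComplexShape.up ℤ).Rel n (n + 1) from rfl),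
        dNext_eq _ (show (ComplexShape.up ℤ).Rel n (n + 1) from rfl), ← Category.assoc,
        (ccInj K i).comm, Category.assoc, ccInj_descF]
    · rw [prevD_eq (h i).hom (show (ComplexShape.up ℤ).Rel (n - 1) n by simp),
        prevD_eq _ (show (ComplexShape.up ℤ).Rel (n - 1) n by simp), ← Category.assoc,
        ccInj_descF]
    · simp

variable [HasDerivedCategory.{w'} C] [HasExactColimitsOfShape (Discrete ι) C]

open DerivedCategory

theorem Q_map_eq_zero_of_homotopy {X Y : CochainComplex C ℤ} (g : X ⟶ Y) (h : Homotopy g 0) :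
    Q.map g = 0 := by
  have : (HomotopyCategory.quotient C _).map g = 0 := by
    rw [HomotopyCategory.eq_of_homotopy _ _ h, Functor.map_zero]
  have h2 : Q.map g = Qh.map ((HomotopyCategory.quotient C _).map g) := rfl
  rw [h2, this]
  exact Functor.map_zero _ _ _

theorem exists_homotopy_of_Q_map_eq_zero {X Y : CochainComplex C ℤ} (g : X ⟶ Y)
    (h : Q.map g = 0) : ∃ (X' : CochainComplex C ℤ) (s : X' ⟶ X), QuasiIso s ∧
      Nonempty (Homotopy (s ≫ g) 0) := by
  have h2 : Qh.map ((HomotopyCategory.quotient C (ComplexShape.up ℤ)).map g) = Qh.map 0 := by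
    rw [Functor.map_zero]; exact h
  rw [MorphismProperty.map_eq_iff_precomp Qh (HomotopyCategory.quasiIso C _)] at h2
  obtain ⟨X', s, hs, e⟩ := h2
  obtain ⟨X', rfl⟩ := HomotopyCategory.quotient_obj_surjective X'
  obtain ⟨s, rfl⟩ := (HomotopyCategory.quotient _ _).map_surjective s
  refine ⟨X', s, ?_, ⟨HomotopyCategory.homotopyOfEq _ _ ?_⟩⟩
  · rw [HomotopyCategory.quotient_map_mem_quasiIso_iff] at hs
    exact hs
  · rw [Functor.map_zero, Functor.map_comp, e, comp_zero]

theorem cc_eq_zero (K : ι → CochainComplex C ℤ) {Y : DerivedCategory C}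
    (f : Q.obj (coprodCx K) ⟶ Y) (H : ∀ i, Q.map (ccInj K i) ≫ f = 0) : f = 0 := by
  obtain ⟨Y, ⟨e⟩⟩ : ∃ Y', Nonempty (Y ≅ Q.obj Y') :=
    ⟨_, ⟨(Q.objObjPreimageIso Y).symm⟩⟩
  rw [← cancel_mono e.hom, zero_comp]
  obtain ⟨Y', g, s, hs, hf⟩ := left_fac (f ≫ e.hom)
  have h1 : ∀ i, Q.map (ccInj K i ≫ g) = 0 := by
    intro i
    have := congrArg (fun z => Q.map (ccInj K i) ≫ z ≫ Q.map s) hf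
    rw [Category.assoc _ (inv (Q.map s)), IsIso.inv_hom_id, Category.comp_id, ← Functor.map_comp] at this
    rw [← this, Category.assoc, ← Category.assoc _ f, H, zero_comp]
  choose K' t ht hh using fun i => exists_homotopy_of_Q_map_eq_zero _ (h1 i)
  have hq := ccMap_quasiIso t ht
  have h2 : Q.map (ccMap t ≫ g) = 0 := by
    refine Q_map_eq_zero_of_homotopy _ (ccHomotopy _ _ fun i => ?_)
    have : ccInj K' i ≫ ccMap t ≫ g = t i ≫ ccInj K i ≫ g := by
      rw [← Category.assoc, ccInj_map, Category.assoc]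
    rw [this]
    exact (hh i).some
  have : IsIso (Q.map (ccMap t)) := by
    rw [isIso_Q_map_iff_quasiIso]; exact hq
  have h3 : Q.map g = 0 := by
    rw [← cancel_epi (Q.map (ccMap t)), ← Functor.map_comp, h2, comp_zero]
  rw [hf, h3, zero_comp]

theorem cc_D_ext (K : ι → CochainComplex C ℤ) {Y : DerivedCategory C}
    {f g : Q.obj (coprodCx K) ⟶ Y} (H : ∀ i, Q.map (ccInj K i) ≫ f = Q.map (ccInj K i) ≫ g) :
    f = g := by
  rw [← sub_eq_zero]
  exact cc_eq_zero K _ fun i => by rw [Preadditive.comp_sub, H, sub_self]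

theorem cc_exists_desc (K : ι → CochainComplex C ℤ) {Y : DerivedCategory C}
    (f : ∀ i, Q.obj (K i) ⟶ Y) : ∃ g : Q.obj (coprodCx K) ⟶ Y, ∀ i, Q.map (ccInj K i) ≫ g = f i := by
  obtain ⟨Y', ⟨e⟩⟩ : ∃ Y', Nonempty (Y ≅ Q.obj Y') :=
    ⟨_, ⟨(Q.objObjPreimageIso Y).symm⟩⟩
  choose K' s hs g hg using fun i => right_fac (f i ≫ e.hom)
  have hs' : ∀ i, QuasiIso (s i) := fun i => by
    rw [← isIso_Q_map_iff_quasiIso]; exact hs i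
  have hq := ccMap_quasiIso s hs'
  have : IsIso (Q.map (ccMap s)) := by
    rw [isIso_Q_map_iff_quasiIso]; exact hq
  refine ⟨inv (Q.map (ccMap s)) ≫ Q.map (ccDesc K' g) ≫ e.inv, fun i => ?_⟩
  have h1 : Q.map (ccInj K i) ≫ inv (Q.map (ccMap s)) = inv (Q.map (s i)) ≫ Q.map (ccInj K' i) := by
    rw [IsIso.comp_inv_eq, Category.assoc, ← Functor.map_comp, ccInj_map, Functor.map_comp,
      IsIso.inv_hom_id_assoc]
  rw [← Category.assoc, h1, Category.assoc, ← Category.assoc (Q.map _), ← Functor.map_comp,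
    ccInj_desc, ← Category.assoc, ← hg, Category.assoc, e.hom_inv_id, Category.comp_id]

noncomputable def ccCofan (K : ι → CochainComplex C ℤ) : Cofan (fun i => (Q.obj (K i) : DerivedCategory C)) :=
  Cofan.mk (Q.obj (coprodCx K)) (fun i => Q.map (ccInj K i))

noncomputable def ccCofanIsColimit (K : ι → CochainComplex C ℤ) : IsColimit (ccCofan.{w, w'} K) :=
  Cofan.IsColimit.mk _ (fun t => (cc_exists_desc K (fun i => t.inj i)).choose)
    (fun t => (cc_exists_desc K (fun i => t.inj i)).choose_spec)
    (fun t m hm => cc_D_ext K fun i =>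
      (hm i).trans ((cc_exists_desc K (fun i => t.inj i)).choose_spec i).symm)

theorem derived_hasCoproductsOfShape : HasCoproductsOfShape ι (DerivedCategory C) := by
  have : ∀ f : ι → DerivedCategory C, HasCoproduct f := fun f => by
    have h1 : HasCoproduct (fun i => (Q.obj (Q.objPreimage (f i)) : DerivedCategory C)) :=
      ⟨⟨_, ccCofanIsColimit (fun i => Q.objPreimage (f i))⟩⟩
    exact @hasColimit_of_iso _ _ _ _ (Discrete.functor (fun i => (Q.obj (Q.objPreimage (f i)) : DerivedCategory C)))
      (Discrete.functor f) h1 (Discrete.natIso fun i => (Q.objObjPreimageIso (f i.as)).symm)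
  exact ⟨fun F => hasColimit_of_iso (Discrete.natIsoFunctor)⟩

end CoprodCx

section KProj

variable {C : Type u} [Category.{v} C] [Abelian C] [HasDerivedCategory.{w'} C]

open DerivedCategory

theorem kproj_full (K L : CochainComplex C ℤ) [K.IsKProjective] (f : Q.obj K ⟶ Q.obj L) :
    ∃ g : K ⟶ L, f = Q.map g := by
  obtain ⟨g, hg⟩ := (CochainComplex.IsKProjective.Qh_map_bijective K
    ((HomotopyCategory.quotient _ _).obj L)).2 f
  obtain ⟨g, rfl⟩ := (HomotopyCategory.quotient _ _).map_surjective g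
  exact ⟨g, hg.symm⟩

theorem kproj_homotopy (K L : CochainComplex C ℤ) [K.IsKProjective] (g : K ⟶ L)
    (h : Q.map g = 0) : Nonempty (Homotopy g 0) := by
  have := (CochainComplex.IsKProjective.Qh_map_bijective K
    ((HomotopyCategory.quotient _ _).obj L)).1 (a₁ := (HomotopyCategory.quotient _ _).map g)
    (a₂ := (HomotopyCategory.quotient _ _).map 0) (by
      rw [Functor.map_zero, Functor.map_zero]
      exact h)
  exact ⟨HomotopyCategory.homotopyOfEq _ _ this⟩

end KProj

section DRbasic

variable (R : Type u) [CommRing R]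

open DerivedCategory

noncomputable abbrev sglR (m : ℤ) : CochainComplex (ModuleCat.{u} R) ℤ :=
  (HomologicalComplex.single (ModuleCat.{u} R) (ComplexShape.up ℤ) m).obj (ModuleCat.of R R)

theorem projective_of_isZero {C : Type*} [Category C] {X : C} (h : IsZero X) : Projective X where
  factors f e _ := ⟨h.to_ _, h.eq_of_src _ _⟩

theorem projR : Projective (ModuleCat.of R R) :=
  (IsProjective.iff_projective (R := R) R).1 inferInstance

instance sglR_kproj (m : ℤ) : (sglR R m).IsKProjective := by
  have : ∀ n, Projective ((sglR R m).X n) := fun n => by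
    by_cases h : n = m
    · subst h
      exact Projective.of_iso (HomologicalComplex.singleObjXSelf _ n _).symm (projR R)
    · exact projective_of_isZero (HomologicalComplex.isZero_single_obj_X _ _ _ _ h)
  exact CochainComplex.isKProjective_of_projective _ m

variable {R}

noncomputable def elt {m : ℤ} {X : CochainComplex (ModuleCat.{u} R) ℤ} (g : sglR R m ⟶ X) : X.X m :=
  ((HomologicalComplex.singleObjXSelf (ComplexShape.up ℤ) m (ModuleCat.of R R)).inv ≫ g.f m) (1 : R)

theorem elt_inj {m : ℤ} {X : CochainComplex (ModuleCat.{u} R) ℤ} {g h : sglR R m ⟶ X}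
    (H : elt g = elt h) : g = h := by
  apply HomologicalComplex.from_single_hom_ext
  rw [← cancel_epi (HomologicalComplex.singleObjXSelf (ComplexShape.up ℤ) m (ModuleCat.of R R)).inv]
  ext
  exact H

theorem elt_comp {m : ℤ} {X Y : CochainComplex (ModuleCat.{u} R) ℤ} (g : sglR R m ⟶ X)
    (h : X ⟶ Y) : elt (g ≫ h) = h.f m (elt g) := rfl

theorem elt_d {m : ℤ} {X : CochainComplex (ModuleCat.{u} R) ℤ} (g : sglR R m ⟶ X) (n : ℤ) :
    X.d m n (elt g) = 0 := by
  have : (g.f m ≫ X.d m n) = 0 := by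
    rw [g.comm, HomologicalComplex.single_obj_d, zero_comp]
  have h2 := congrArg (fun z => ((HomologicalComplex.singleObjXSelf (ComplexShape.up ℤ) m
    (ModuleCat.of R R)).inv ≫ z) (1 : R)) this
  exact h2

theorem exists_elt {m : ℤ} {X : CochainComplex (ModuleCat.{u} R) ℤ} (x : X.X m)
    (hx : X.d m (m + 1) x = 0) : ∃ g : sglR R m ⟶ X, elt g = x := by
  refine ⟨HomologicalComplex.mkHomFromSingle (ModuleCat.ofHom (LinearMap.toSpanSingleton R _ x)) ?_, ?_⟩
  · intro k hk
    obtain rfl : m + 1 = k := hk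
    ext
    change X.d m (m + 1) ((1 : R) • x) = 0
    rw [one_smul, hx]
  · rw [elt, HomologicalComplex.mkHomFromSingle_f, Iso.inv_hom_id_assoc]
    change (1 : R) • x = x
    rw [one_smul]

theorem homotopic_elt {m : ℤ} {X : CochainComplex (ModuleCat.{u} R) ℤ} (g : sglR R m ⟶ X)
    (h : Homotopy g 0) : ∃ y, X.d (m - 1) m y = elt g := by
  have := h.comm m
  rw [dNext_eq h.hom (show (ComplexShape.up ℤ).Rel m (m + 1) from rfl),
    prevD_eq h.hom (show (ComplexShape.up ℤ).Rel (m - 1) m by simp),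
    HomologicalComplex.single_obj_d, zero_comp, zero_add, HomologicalComplex.zero_f, add_zero] at this
  refine ⟨((HomologicalComplex.singleObjXSelf (ComplexShape.up ℤ) m (ModuleCat.of R R)).inv ≫
    h.hom m (m - 1)) (1 : R), ?_⟩
  rw [elt, this]
  rfl

theorem elt_homotopic {m : ℤ} {X : CochainComplex (ModuleCat.{u} R) ℤ} (g : sglR R m ⟶ X)
    (y) (hy : X.d (m - 1) m y = elt g) [HasDerivedCategory.{w'} (ModuleCat.{u} R)] :
    Q.map g = 0 := by
  let h0 : (sglR R m).X m ⟶ X.X (m - 1) :=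
    (HomologicalComplex.singleObjXSelf (ComplexShape.up ℤ) m (ModuleCat.of R R)).hom ≫
    ModuleCat.ofHom (LinearMap.toSpanSingleton R _ y)
  let H : ∀ i j, (ComplexShape.up ℤ).Rel j i → ((sglR R m).X i ⟶ X.X j) := fun i j hij =>
    if h : i = m then eqToHom (by rw [h]) ≫ h0 ≫ eqToHom (by
      have : j + 1 = i := hij
      rw [show m - 1 = j by lia]) else 0
  have e : g = Homotopy.nullHomotopicMap' H := by
    apply elt_inj
    rw [elt, elt, Homotopy.nullHomotopicMap'_f (show (ComplexShape.up ℤ).Rel (m - 1) m by simp)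
      (show (ComplexShape.up ℤ).Rel m (m + 1) from rfl)]
    rw [HomologicalComplex.single_obj_d, zero_comp, zero_add]
    have : H m (m - 1) (by simp) = h0 := by
      simp only [H, dif_pos]
      simp
    rw [this, Category.assoc, Iso.inv_hom_id_assoc]
    refine hy.symm.trans ?_
    change _ = X.d (m - 1) m ((1 : R) • y)
    rw [one_smul]
  exact Q_map_eq_zero_of_homotopy g (e ▸ Homotopy.nullHomotopy' H)

variable [HasDerivedCategory.{w'} (ModuleCat.{u} R)]

theorem sglR_hom_zero_iff (m : ℤ) (X : CochainComplex (ModuleCat.{u} R) ℤ) :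
    (∀ g : Q.obj (sglR R m) ⟶ Q.obj X, g = 0) ↔
      ∀ x, X.d m (m + 1) x = 0 → ∃ y, X.d (m - 1) m y = x := by
  constructor
  · intro h x hx
    obtain ⟨g, rfl⟩ := exists_elt x hx
    obtain ⟨H⟩ := kproj_homotopy _ _ g (h _)
    exact homotopic_elt g H
  · intro h g
    obtain ⟨g, rfl⟩ := kproj_full _ _ g
    obtain ⟨y, hy⟩ := h _ (elt_d g _)
    exact elt_homotopic g y hy

theorem exactAt_iff_elt (m : ℤ) (X : CochainComplex (ModuleCat.{u} R) ℤ) : X.ExactAt m ↔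
    ∀ x, X.d m (m + 1) x = 0 → ∃ y, X.d (m - 1) m y = x := by
  rw [X.exactAt_iff' (m - 1) m (m + 1) (by simp) (by simp), ShortComplex.moduleCat_exact_iff]
  rfl

variable (R) in
noncomputable abbrev RR : DerivedCategory (ModuleCat.{u} R) := smod R (ModuleCat.of R R)

noncomputable def smodShift (M : ModuleCat.{u} R) (m : ℤ) : (smod R M)⟦-m⟧ ≅
    Q.obj ((HomologicalComplex.single (ModuleCat.{u} R) (ComplexShape.up ℤ) m).obj M) :=
  ((DerivedCategory.singleFunctors (ModuleCat.{u} R)).shiftIso (-m) m 0 (by simp)).app M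

theorem RR_hom_zero_iff (k m : ℤ) (h : k = -m) (Y : DerivedCategory (ModuleCat.{u} R)) :
    (∀ g : (RR R)⟦k⟧ ⟶ Y, g = 0) ↔ (∀ g : Q.obj (sglR R m) ⟶ Y, g = 0) := by
  subst h
  have e := smodShift (ModuleCat.of R R) m
  constructor
  · intro h g
    rw [← cancel_epi e.hom, h (e.hom ≫ g), comp_zero]
  · intro h g
    rw [← cancel_epi e.inv, h (e.inv ≫ g), comp_zero]

theorem isZero_of_orth_RR (Y : DerivedCategory (ModuleCat.{u} R)) (h : Orth (RR R) Y) :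
    IsZero Y := by
  obtain ⟨X, ⟨e⟩⟩ : ∃ Y', Nonempty (Y ≅ Q.obj Y') := ⟨_, ⟨(Q.objObjPreimageIso Y).symm⟩⟩
  have h' : Orth (RR R) (Q.obj X) := h.of_iso (Iso.refl _) e
  refine IsZero.of_iso ?_ e
  have hq : QuasiIso (0 : X ⟶ X) := by
    rw [quasiIso_iff]
    intro m
    have : X.ExactAt m := by
      rw [exactAt_iff_elt, ← sglR_hom_zero_iff.{w'}]
      exact (RR_hom_zero_iff _ m rfl _).1 (h' _)
    rw [quasiIsoAt_iff_exactAt _ _ this]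
    exact this
  have : IsIso (Q.map (0 : X ⟶ X)) := by
    rw [isIso_Q_map_iff_quasiIso]; exact hq
  rw [Functor.map_zero] at this
  have h3 : 𝟙 (Q.obj X) = 0 := by
    rw [← IsIso.inv_hom_id (0 : Q.obj X ⟶ Q.obj X), comp_zero]
  exact (IsZero.iff_id_eq_zero _).2 h3

instance DR_hasCoproducts : HasCoproducts.{u} (DerivedCategory (ModuleCat.{u} R)) :=
  fun ι => derived_hasCoproductsOfShape

theorem cc_elem {ι : Type u} (K : ι → CochainComplex (ModuleCat.{u} R) ℤ) (n : ℤ)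
    (x : (coprodCx K).X n) :
    ∃ (s : Finset ι) (y : ∀ i, (K i).X n), x = ∑ i ∈ s, (ccInj K i).f n (y i) := by
  let U : Submodule R ((coprodCx K).X n) := ⨆ i, LinearMap.range ((ccInj K i).f n).hom
  have hU : x ∈ U := by
    have : ModuleCat.ofHom U.mkQ = 0 := by
      apply cc_hom_ext_f
      intro i
      rw [comp_zero]
      ext y
      change U.mkQ ((ccInj K i).f n y) = 0
      rw [Submodule.mkQ_apply, Submodule.Quotient.mk_eq_zero]
      exact Submodule.mem_iSup_of_mem i ⟨y, rfl⟩
    have h2 : U.mkQ x = 0 := congrArg (fun z => z.hom x) this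
    rwa [Submodule.mkQ_apply, Submodule.Quotient.mk_eq_zero] at h2
  obtain ⟨f, hf, rfl⟩ := (Submodule.mem_iSup_iff_exists_finsupp _ _).1 hU
  choose y hy using hf
  refine ⟨f.support, y, ?_⟩
  rw [Finsupp.sum]
  exact Finset.sum_congr rfl fun i _ => (hy i).symm

noncomputable def ccCofan' {ι : Type u} (K : ι → CochainComplex (ModuleCat.{u} R) ℤ) : Cofan K :=
  Cofan.mk (coprodCx K) (ccInj K)

noncomputable def ccCofanIsColimit' {ι : Type u} (K : ι → CochainComplex (ModuleCat.{u} R) ℤ) :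
    IsColimit (ccCofan' K) :=
  Cofan.IsColimit.mk _ (fun t => ccDesc K t.inj) (fun t i => ccInj_desc K _ i)
    (fun t m hm => cc_hom_ext K fun i => (hm i).trans (ccInj_desc K _ i).symm)

theorem isCompactObj_sglR (m : ℤ) : IsCompactObj.{u} (Q.obj (sglR R m)) := by
  apply isCompactObj_of_exists_sum
  intro ι f c hc h
  let K : ι → CochainComplex (ModuleCat.{u} R) ℤ := fun i => Q.objPreimage (f i)
  let e : ∀ i, Q.obj (K i) ≅ f i := fun i => Q.objObjPreimageIso (f i)
  let φ : c.pt ⟶ Q.obj (coprodCx K) := Cofan.IsColimit.desc hc (fun i => (e i).inv ≫ Q.map (ccInj K i))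
  obtain ⟨ψ, hψ⟩ := cc_exists_desc.{u, w'} K (fun i => (e i).hom ≫ c.inj i)
  have hφψ : φ ≫ ψ = 𝟙 _ := by
    refine Cofan.IsColimit.hom_ext hc _ _ fun i => ?_
    rw [← Category.assoc, Cofan.IsColimit.fac, Category.assoc, hψ, Iso.inv_hom_id_assoc]
    exact (Category.comp_id _).symm
  obtain ⟨g, hg⟩ := kproj_full _ _ (h ≫ φ)
  obtain ⟨s, y, hs⟩ := cc_elem K m (elt g)
  obtain ⟨E, P, hE, hinj⟩ : ∃ (E : coprodCx K ⟶ coprodCx K) (P : ∀ i, coprodCx K ⟶ K i),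
      E = ∑ i ∈ s, P i ≫ ccInj K i ∧ ∀ i ∈ s, ccInj K i ≫ E = ccInj K i :=
    ⟨esum (ccCofanIsColimit' K) s, cproj (ccCofanIsColimit' K), rfl,
      fun i hi => inj_esum (ccCofanIsColimit' K) hi⟩
  have hg2 : g ≫ E = g := by
    apply elt_inj
    rw [elt_comp, hs]
    refine (map_sum (E.f m).hom _ _).trans ?_
    refine Finset.sum_congr rfl fun i hi => ?_
    have := congrArg (fun z => z.f m (y i)) (hinj i hi)
    exact this
  refine ⟨s, fun i => Q.map (g ≫ P i) ≫ (e i).hom, ?_⟩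
  have h1 : h = Q.map g ≫ ψ := by
    rw [← hg, Category.assoc, hφψ]
    exact (Category.comp_id _).symm
  have h2 : h = Q.map (g ≫ E) ≫ ψ := by rw [hg2]; exact h1
  rw [h2, hE, Preadditive.comp_sum, Functor.map_sum, Preadditive.sum_comp]
  refine Finset.sum_congr rfl fun i _ => ?_
  rw [← Category.assoc, Functor.map_comp, Category.assoc, hψ, Category.assoc]

theorem RR_iso : Nonempty (RR R ≅ Q.obj (sglR R 0)) := ⟨Iso.refl _⟩

theorem isCompactObj_RR : IsCompactObj.{u} (RR R) := isCompactObj_sglR 0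

theorem smallHom_RR : SmallHom.{u} (RR R) := by
  intro Y
  let X := Q.objPreimage Y
  let e : Q.obj X ≅ Y := Q.objObjPreimageIso Y
  refine small_of_surjective (f := fun g : sglR R 0 ⟶ X => (Q.map g ≫ e.hom : RR R ⟶ Y)) ?_
  have key : ∀ h : Q.obj (sglR R 0) ⟶ Y, ∃ g, Q.map g ≫ e.hom = h := fun h => by
    obtain ⟨g, hg⟩ := kproj_full (sglR R 0) X (h ≫ e.inv)
    exact ⟨g, by
      rw [← hg, Category.assoc, e.inv_hom_id]; exact Category.comp_id _⟩
  exact key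

theorem mem_loc_RR (X : DerivedCategory (ModuleCat.{u} R)) : X ∈ Loc.{u} {RR R} :=
  (mem_loc_iff isCompactObj_RR smallHom_RR X).2 fun Y hY =>
    orth_of_forall fun k g => ((shiftFunctor _ k).map_isZero (isZero_of_orth_RR Y hY)).eq_of_tgt _ _

theorem smallHom_DR (X : DerivedCategory (ModuleCat.{u} R)) : SmallHom.{u} X :=
  loc_singleton_le smallHom_isLocalizing smallHom_RR (mem_loc_RR X)

end DRbasic

section LemmaA

open DerivedCategory

variable {R : Type u} [CommRing R] [HasDerivedCategory.{w'} (ModuleCat.{u} R)]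

structure GoodFun (ψ : ModuleCat.{u} R ⥤ CochainComplex (ModuleCat.{u} R) ℤ)
    [ψ.PreservesZeroMorphisms] : Prop where
  ses : ∀ S : ShortComplex (ModuleCat.{u} R), S.ShortExact → (S.map ψ).ShortExact
  pres : ∀ ι : Type u, PreservesColimitsOfShape (Discrete ι) ψ
  bdd : ∃ b : ℤ, ∀ M m, b < m → IsZero ((ψ.obj M).X m)

variable {ψ : ModuleCat.{u} R ⥤ CochainComplex (ModuleCat.{u} R) ℤ} [ψ.PreservesZeroMorphisms]

theorem GoodFun.tri (hψ : GoodFun ψ) {S : ShortComplex (ModuleCat.{u} R)} (hS : S.ShortExact) :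
    ∃ δ : Q.obj (ψ.obj S.X₃) ⟶ (Q.obj (ψ.obj S.X₁))⟦(1 : ℤ)⟧,
      Triangle.mk (Q.map (ψ.map S.f)) (Q.map (ψ.map S.g)) δ ∈
        (distinguishedTriangles : Set (Triangle (DerivedCategory (ModuleCat.{u} R)))) :=
  ⟨_, triangleOfSES_distinguished (hψ.ses S hS)⟩

theorem GoodFun.coprod (hψ : GoodFun ψ) {L : Set (DerivedCategory (ModuleCat.{u} R))}
    (hL : IsLocalizingSub.{u} L) {ι : Type u} (M : ι → ModuleCat.{u} R) (c : Cofan M)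
    (hc : IsColimit c) (h : ∀ i, Q.obj (ψ.obj (M i)) ∈ L) : Q.obj (ψ.obj c.pt) ∈ L := by
  have := hψ.pres ι
  have h1 : IsColimit (Cofan.mk (f := fun i => ψ.obj (M i)) (ψ.obj c.pt) (fun i => ψ.map (c.inj i))) :=
    isColimitCofanMkObjOfIsColimit ψ M c.inj (hc.ofIsoColimit (Cofan.ext (Iso.refl _) (fun i => Category.comp_id _)))
  have e : coprodCx (fun i => ψ.obj (M i)) ≅ ψ.obj c.pt :=
    (ccCofanIsColimit' (fun i => ψ.obj (M i))).coconePointUniqueUpToIso h1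
  refine hL.mem_of_iso (Q.mapIso e) ?_
  exact hL.coprod_mem _ _ (ccCofanIsColimit.{u, w'} (fun i => ψ.obj (M i))) h

theorem GoodFun.hom_zero (hψ : GoodFun ψ) : ∃ b : ℤ, ∀ N : ModuleCat.{u} R, ∀ k < b,
    ∀ g : (RR R)⟦k⟧ ⟶ Q.obj (ψ.obj N), g = 0 := by
  obtain ⟨b, hb⟩ := hψ.bdd
  refine ⟨-b, fun N k hk => ?_⟩
  rw [RR_hom_zero_iff k (-k) (by simp), sglR_hom_zero_iff]
  intro x _
  have hz := hb N (-k) (by lia)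
  have : Subsingleton ((ψ.obj N).X (-k)) := ModuleCat.subsingleton_of_isZero hz
  exact ⟨0, Subsingleton.elim _ _⟩

def TorsBy (ℱ : Set (Ideal R)) (N : ModuleCat.{u} R) : Prop :=
  ∀ x : N, ∃ J ∈ ℱ, ∀ r ∈ J, r • x = 0

def kerSC {P N : ModuleCat.{u} R} (π : P ⟶ N) : ShortComplex (ModuleCat.{u} R) :=
  ShortComplex.mk (ModuleCat.ofHom (LinearMap.ker π.hom).subtype) π
    (ModuleCat.hom_ext (LinearMap.ext fun x => x.2))

theorem kerSC_ses {P N : ModuleCat.{u} R} (π : P ⟶ N) (hπ : Function.Surjective π) :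
    (kerSC π).ShortExact := by
  apply ModuleCat.shortComplex_shortExact
  · intro x
    constructor
    · intro hx
      exact ⟨⟨x, hx⟩, rfl⟩
    · rintro ⟨y, rfl⟩
      exact y.2
  · exact Subtype.val_injective
  · exact hπ

theorem tors_cover {ℱ : Set (Ideal R)} (hne : ℱ.Nonempty)
    (hdir : ∀ J ∈ ℱ, ∀ J' ∈ ℱ, ∃ J'' ∈ ℱ, J'' ≤ J ∧ J'' ≤ J') (N : ModuleCat.{u} R)
    (hN : TorsBy ℱ N) : ∃ (S : ShortComplex (ModuleCat.{u} R)), S.ShortExact ∧ S.X₃ = N ∧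
      TorsBy ℱ S.X₁ ∧ ∃ (J : N → Ideal R) (c : Cofan (fun x => ModuleCat.of R (R ⧸ J x))),
        (∀ x, J x ∈ ℱ) ∧ Nonempty (IsColimit c) ∧ S.X₂ = c.pt := by
  classical
  choose J hJ hJx using hN
  let P : ModuleCat.{u} R := ModuleCat.of R (DirectSum N (fun x => ModuleCat.of R (R ⧸ J x)))
  let π : P →ₗ[R] N := DirectSum.toModule R N N (fun x =>
    Submodule.liftQ (J x) (LinearMap.toSpanSingleton R N x) (fun r hr => hJx x r hr))
  have hπ : Function.Surjective π := fun x =>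
    ⟨DirectSum.lof R N (fun x => ModuleCat.of R (R ⧸ J x)) x (Submodule.Quotient.mk 1), by
      refine (DirectSum.toModule_lof R (M := fun x => ModuleCat.of R (R ⧸ J x)) x _).trans ?_
      change (1 : R) • x = x
      rw [one_smul]⟩
  refine ⟨kerSC (P := P) (ModuleCat.ofHom π), kerSC_ses _ hπ, rfl, ?_, J, ModuleCat.coproductCocone _, hJ,
    ⟨ModuleCat.coproductCoconeIsColimit _⟩, rfl⟩
  · have key : ∀ x : P, ∃ J ∈ ℱ, ∀ r ∈ J, r • x = 0 := by
      intro x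
      induction x using DirectSum.induction_on with
      | zero => obtain ⟨J, hJ⟩ := hne; exact ⟨J, hJ, fun r _ => smul_zero r⟩
      | of i y =>
        refine ⟨J i, hJ i, fun r hr => ?_⟩
        change r • DirectSum.lof R N (fun x => ModuleCat.of R (R ⧸ J x)) i y = 0
        rw [← map_smul]
        obtain ⟨y, rfl⟩ := Submodule.Quotient.mk_surjective _ y
        rw [← Submodule.Quotient.mk_smul, (Submodule.Quotient.mk_eq_zero _).2, map_zero]
        exact Ideal.mul_mem_right _ _ hr
      | add x y hx hy =>
        obtain ⟨J1, h1, h1'⟩ := hx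
        obtain ⟨J2, h2, h2'⟩ := hy
        obtain ⟨J3, h3, h31, h32⟩ := hdir _ h1 _ h2
        exact ⟨J3, h3, fun r hr => by rw [smul_add, h1' r (h31 hr), h2' r (h32 hr), add_zero]⟩
    rintro ⟨x, hx⟩
    obtain ⟨J, h, h'⟩ := key x
    exact ⟨J, h, fun r hr => Subtype.ext (h' r hr)⟩

theorem lemmaA (hψ : GoodFun ψ) {L : Set (DerivedCategory (ModuleCat.{u} R))}
    (hL : IsLocalizingSub.{u} L) (ℱ : Set (Ideal R)) (hne : ℱ.Nonempty)
    (hdir : ∀ J ∈ ℱ, ∀ J' ∈ ℱ, ∃ J'' ∈ ℱ, J'' ≤ J ∧ J'' ≤ J')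
    (hF : ∀ J ∈ ℱ, Q.obj (ψ.obj (ModuleCat.of R (R ⧸ J))) ∈ L)
    (N : ModuleCat.{u} R) (hN : TorsBy ℱ N) : Q.obj (ψ.obj N) ∈ L := by
  have := locProp_tri hL
  let Cl : ℕ → Type _ := fun n => {X : DerivedCategory (ModuleCat.{u} R) //
    ∃ N, TorsBy ℱ N ∧ Nonempty (X ≅ (Q.obj (ψ.obj N))⟦(n : ℤ)⟧)}
  have step : ∀ n (X : Cl n), ∃ (X' : Cl (n + 1)) (φ : X.1 ⟶ X'.1), (locProp L).trW φ := by
    rintro n ⟨X, N, hN, ⟨e⟩⟩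
    obtain ⟨S, hS, rfl, hS1, J, c, hJ, ⟨hc⟩, hc2⟩ := tors_cover hne hdir N hN
    obtain ⟨δ, hδ⟩ := hψ.tri hS
    have h2 : Q.obj (ψ.obj S.X₂) ∈ L := by
      rw [hc2]
      exact hψ.coprod hL _ c hc (fun i => hF _ (hJ i))
    have h3 : (locProp L).trW δ := ObjectProperty.trW.mk' _ (rot_of_distTriang _ hδ) h2
    have h4 := h3.shift (n : ℤ)
    refine ⟨⟨((Q.obj (ψ.obj S.X₁))⟦(1 : ℤ)⟧)⟦(n : ℤ)⟧, S.X₁, hS1,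
      ⟨((shiftFunctorAdd' _ (1 : ℤ) (n : ℤ) ((n + 1 : ℕ) : ℤ) (by push_cast; ring)).app _).symm⟩⟩,
      e.hom ≫ δ⟦(n : ℤ)⟧', ?_⟩
    exact MorphismProperty.RespectsIso.precomp _ _ _ h4
  choose nx φ hφ using step
  let Z : ∀ n, Cl n := fun n => Nat.rec ⟨Q.obj (ψ.obj N), N, hN, ⟨((shiftFunctorZero _ ℤ).app _).symm⟩⟩
    (fun n X => nx n X) n
  let f : ∀ n, (Z n).1 ⟶ (Z (n + 1)).1 := fun n => φ n (Z n)
  obtain ⟨b, hb⟩ := hψ.hom_zero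
  obtain ⟨F, Y, a, b, c, hT, hF, hY⟩ := tower_lemma hL (Functor.ofSequence f) (fun n => by
      rw [Functor.ofSequence_map_homOfLE_succ]; exact hφ _ _)
      {G | ∃ k : ℤ, Nonempty (G ≅ (RR R)⟦k⟧)}
      (fun G ⟨k, ⟨e⟩⟩ => (isCompactObj_RR.shift k).of_iso e.symm)
      (fun G ⟨k, ⟨e⟩⟩ m => ⟨k + m, ⟨(shiftFunctor _ m).mapIso e ≪≫
        ((shiftFunctorAdd _ k m).app _).symm⟩⟩)
      (fun G ⟨k, ⟨e⟩⟩ n g => by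
        let m : ℕ := n + (k - b + 1).toNat
        refine ⟨m, Nat.le_add_right _ _, ?_⟩
        have z : ∀ g : G ⟶ (Z m).1, g = 0 := by
          intro g
          obtain ⟨N', _, ⟨e'⟩⟩ := (Z m).2
          rw [← cancel_epi e.inv, comp_zero, ← cancel_mono e'.hom, zero_comp]
          exact shift_hom_zero _ _ (k - m) rfl (hb N' _ (by lia)) _
        exact z _)
  have hY0 : IsZero Y := isZero_of_orth_RR Y fun k g => hY _ ⟨k, ⟨Iso.refl _⟩⟩ g
  exact hL.mem₂ _ hT hF (hL.isZero_mem hY0)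

theorem good_single : GoodFun (HomologicalComplex.single (ModuleCat.{u} R) (ComplexShape.up ℤ) 0) where
  ses S hS := hS.map_of_exact _
  pres ι := inferInstance
  bdd := ⟨0, fun M m hm => HomologicalComplex.isZero_single_obj_X _ _ _ _ hm.ne'⟩

end LemmaA

section Part1

open DerivedCategory

variable {R : Type u} [CommRing R] [HasDerivedCategory.{w'} (ModuleCat.{u} R)]

theorem smod_mem_of_killed {L : Set (DerivedCategory (ModuleCat.{u} R))} (hL : IsLocalizingSub.{u} L)
    (I : Ideal R) (hI : smod R (ModuleCat.of R (R ⧸ I)) ∈ L) (N : ModuleCat.{u} R)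
    (hN : ∀ r ∈ I, ∀ x : N, r • x = 0) : smod R N ∈ L :=
  lemmaA good_single hL {I} ⟨I, rfl⟩ (by
    rintro _ rfl _ rfl
    exact ⟨_, rfl, le_rfl, le_rfl⟩) (by rintro _ rfl; exact hI) N
    (fun x => ⟨I, rfl, fun r hr => hN r hr x⟩)

theorem smod_tri {S : ShortComplex (ModuleCat.{u} R)} (hS : S.ShortExact) :
    ∃ (f : smod R S.X₁ ⟶ smod R S.X₂) (g : smod R S.X₂ ⟶ smod R S.X₃)
      (δ : smod R S.X₃ ⟶ (smod R S.X₁)⟦(1 : ℤ)⟧),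
      Triangle.mk f g δ ∈
        (distinguishedTriangles : Set (Triangle (DerivedCategory (ModuleCat.{u} R)))) :=
  ⟨_, _, _, hS.singleTriangle_distinguished⟩

theorem smod_mem_ext {L : Set (DerivedCategory (ModuleCat.{u} R))} (hL : IsLocalizingSub.{u} L)
    (N : ModuleCat.{u} R) (U : Submodule R N) (h1 : smod R (ModuleCat.of R U) ∈ L)
    (h2 : smod R (ModuleCat.of R (N ⧸ U)) ∈ L) : smod R N ∈ L := by
  have hs := kerSC_ses (ModuleCat.ofHom U.mkQ) U.mkQ_surjective
  obtain ⟨f, g, δ, hT⟩ := smod_tri.{w'} hs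
  refine hL.mem₂ _ hT ?_ h2
  refine hL.mem_of_iso ?_ h1
  exact (singleFunctor _ 0).mapIso (LinearEquiv.toModuleIso (LinearEquiv.ofEq _ _ U.ker_mkQ.symm))

theorem smod_mem_of_pow {L : Set (DerivedCategory (ModuleCat.{u} R))} (hL : IsLocalizingSub.{u} L)
    (I : Ideal R) (hI : smod R (ModuleCat.of R (R ⧸ I)) ∈ L) (n : ℕ) : ∀ (N : ModuleCat.{u} R)
    (hN : ∀ r ∈ I ^ n, ∀ x : N, r • x = 0), smod R N ∈ L := by
  induction n with
  | zero =>
    intro N hN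
    refine smod_mem_of_killed hL I hI N fun r _ x => ?_
    have := hN 1 (by simp) x
    rw [one_smul] at this
    rw [this, smul_zero]
  | succ n ih =>
    intro N hN
    refine smod_mem_ext hL N (I • (⊤ : Submodule R N)) (ih _ ?_)
      (smod_mem_of_killed hL I hI _ ?_)
    · rintro r hr ⟨x, hx⟩
      apply Subtype.ext
      change r • x = 0
      induction hx using Submodule.smul_induction_on' with
      | smul s hs y hy =>
        rw [smul_smul]
        exact hN _ (by rw [pow_succ]; exact Ideal.mul_mem_mul hr hs) y
      | add y hy z hz h1 h2 => rw [smul_add, h1, h2, add_zero]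
    · intro r hr x
      obtain ⟨x, rfl⟩ := Submodule.Quotient.mk_surjective _ x
      change Submodule.Quotient.mk (r • x) = 0
      rw [Submodule.Quotient.mk_eq_zero]
      exact Submodule.smul_mem_smul hr trivial

theorem orth_of_smul {X Y : DerivedCategory (ModuleCat.{u} R)} (f : R) (h1 : f • 𝟙 X = 0)
    (h2 : IsIso (f • 𝟙 Y)) : Orth X Y := by
  intro k g
  have h3 : f • 𝟙 (X⟦k⟧) = 0 := by
    have := congrArg (fun z => (shiftFunctor _ k).map z) h1
    rwa [Functor.map_smul, Functor.map_zero, CategoryTheory.Functor.map_id] at this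
  have h4 : f • g = 0 := by
    rw [← Category.id_comp g, ← Linear.smul_comp, h3, zero_comp]
  rw [← cancel_mono (f • 𝟙 Y), zero_comp, Linear.comp_smul, Category.comp_id, h4]

theorem smod_smul (M : ModuleCat.{u} R) (f : R) : f • 𝟙 (smod R M) =
    (singleFunctor (ModuleCat.{u} R) 0).map (f • 𝟙 M) := by
  have h : (singleFunctor (ModuleCat.{u} R) 0).map (f • 𝟙 M) =
      f • 𝟙 ((singleFunctor (ModuleCat.{u} R) 0).obj M) := by
    rw [Functor.map_smul, CategoryTheory.Functor.map_id]
  exact h.symm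

theorem smod_smul_zero (M : ModuleCat.{u} R) (f : R) (h : ∀ x : M, f • x = 0) :
    f • 𝟙 (smod R M) = 0 := by
  have : f • 𝟙 M = 0 := by
    ext x
    exact h x
  rw [smod_smul, this, Functor.map_zero]
  rfl

theorem smod_smul_iso (M : ModuleCat.{u} R) (f : R) (h : Function.Bijective (fun x : M => f • x)) :
    IsIso (f • 𝟙 (smod R M)) := by
  have : IsIso (f • 𝟙 M) := by
    rw [ConcreteCategory.isIso_iff_bijective]
    exact h
  have h2 : IsIso ((singleFunctor (ModuleCat.{u} R) 0).map (f • 𝟙 M)) := Functor.map_isIso _ _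
  rw [smod_smul]
  exact h2

theorem part1_mp (I J : Ideal R) (hI : I.FG) (h : I.radical ≤ J.radical) :
    Loc.{u} {smod R (ModuleCat.of R (R ⧸ J))} ⊆ Loc.{u} {smod R (ModuleCat.of R (R ⧸ I))} := by
  obtain ⟨n, hn⟩ := Ideal.exists_pow_le_of_le_radical_of_fg (Ideal.le_radical.trans h) hI
  refine loc_singleton_le (loc_isLocalizing _) ?_
  refine smod_mem_of_pow (loc_isLocalizing _) I (mem_loc_self _) n _ ?_
  intro r hr x
  obtain ⟨x, rfl⟩ := Submodule.Quotient.mk_surjective _ x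
  change Submodule.Quotient.mk (r • x) = 0
  rw [Submodule.Quotient.mk_eq_zero]
  exact Ideal.mul_mem_right _ _ (hn hr)

theorem part1_mpr (I J : Ideal R)
    (h : Loc.{u} {smod R (ModuleCat.of R (R ⧸ J))} ⊆ Loc.{u} {smod R (ModuleCat.of R (R ⧸ I))}) :
    I.radical ≤ J.radical := by
  rw [Ideal.radical_le_radical_iff]
  intro f hf
  by_contra hfJ
  rw [Ideal.radical_eq_sInf, Ideal.mem_sInf] at hfJ
  push Not at hfJ
  obtain ⟨p, ⟨hJp, hp⟩, hfp⟩ := hfJ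
  let k := FractionRing (R ⧸ p)
  let E : ModuleCat.{u} R := ModuleCat.of R k
  have hsm : ∀ (r : R) (x : k), r • x = algebraMap (R ⧸ p) k (Ideal.Quotient.mk p r) * x := by
    intro r x
    rw [Algebra.smul_def]
    rfl
  have hf0 : algebraMap (R ⧸ p) k (Ideal.Quotient.mk p f) ≠ 0 := by
    rw [Ne, FaithfulSMul.algebraMap_eq_zero_iff, Ideal.Quotient.eq_zero_iff_mem]
    exact hfp
  have h1 : Orth (smod R (ModuleCat.of R (R ⧸ I))) (smod R E) := by
    refine orth_of_smul f (smod_smul_zero _ _ ?_) (smod_smul_iso _ _ ?_)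
    · intro x
      obtain ⟨x, rfl⟩ := Submodule.Quotient.mk_surjective _ x
      change Submodule.Quotient.mk (f • x) = 0
      rw [Submodule.Quotient.mk_eq_zero]
      exact Ideal.mul_mem_right _ _ hf
    · constructor
      · intro x y hxy
        have z : f • (x : k) = f • (y : k) := hxy
        rw [hsm, hsm] at z
        exact mul_left_cancel₀ hf0 z
      · intro y
        refine ⟨(algebraMap (R ⧸ p) k (Ideal.Quotient.mk p f))⁻¹ * (y : k), ?_⟩
        refine (hsm _ _).trans ?_
        rw [mul_inv_cancel_left₀ hf0]
  have h2 := orth_loc h1 (h (mem_loc_self _))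
  let φ : ModuleCat.of R (R ⧸ J) ⟶ E := ModuleCat.ofHom
    (Submodule.liftQ J (LinearMap.toSpanSingleton R k 1) (fun r hr => by
      change r • (1 : k) = 0
      rw [hsm, Ideal.Quotient.eq_zero_iff_mem.2 (hJp hr), map_zero, zero_mul]))
  have h3 : φ = 0 := (singleFunctor (ModuleCat.{u} R) 0).map_injective (by
    rw [Functor.map_zero]
    exact h2.eq_zero _)
  have h4 : φ (Submodule.Quotient.mk 1) = 0 := by rw [h3]; rfl
  have h5 : (1 : R) • (1 : k) = 0 := h4
  rw [one_smul] at h5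
  exact one_ne_zero h5

end Part1

section Koszul

open DerivedCategory

variable {R : Type u} [CommRing R] [HasDerivedCategory.{w'} (ModuleCat.{u} R)]

theorem exists_invRot {X Y Z : DerivedCategory (ModuleCat.{u} R)} {f : X ⟶ Y} {g : Y ⟶ Z}
    {h : Z ⟶ X⟦(1 : ℤ)⟧} (hT : Triangle.mk f g h ∈ distinguishedTriangles) :
    ∃ (p : Z⟦(-1 : ℤ)⟧ ⟶ X) (q : Y ⟶ Z⟦(-1 : ℤ)⟧⟦(1 : ℤ)⟧),
      Triangle.mk p f q ∈ (distinguishedTriangles : Set (Triangle (DerivedCategory (ModuleCat.{u} R)))) :=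
  ⟨_, _, inv_rot_of_distTriang _ hT⟩

theorem exists_rot {X Y Z : DerivedCategory (ModuleCat.{u} R)} {f : X ⟶ Y} {g : Y ⟶ Z}
    {h : Z ⟶ X⟦(1 : ℤ)⟧} (hT : Triangle.mk f g h ∈ distinguishedTriangles) :
    ∃ (q : X⟦(1 : ℤ)⟧ ⟶ Y⟦(1 : ℤ)⟧),
      Triangle.mk g h q ∈ (distinguishedTriangles : Set (Triangle (DerivedCategory (ModuleCat.{u} R)))) :=
  ⟨_, rot_of_distTriang _ hT⟩

def annD (X : DerivedCategory (ModuleCat.{u} R)) : Ideal R where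
  carrier := {r | r • 𝟙 X = 0}
  add_mem' {a b} ha hb := by
    change (a + b) • 𝟙 X = 0
    rw [add_smul, show a • 𝟙 X = 0 from ha, show b • 𝟙 X = 0 from hb, add_zero]
  zero_mem' := zero_smul _ _
  smul_mem' c a ha := by
    change (c * a) • 𝟙 X = 0
    rw [mul_smul, show a • 𝟙 X = 0 from ha, smul_zero]

theorem mem_annD {X : DerivedCategory (ModuleCat.{u} R)} {r : R} : r ∈ annD X ↔ r • 𝟙 X = 0 := Iff.rfl

theorem annD_src {X Y : DerivedCategory (ModuleCat.{u} R)} {r : R} (h : r ∈ annD X) (g : X ⟶ Y) :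
    r • g = 0 := by
  rw [← Category.id_comp g, ← Linear.smul_comp, mem_annD.1 h, zero_comp]

theorem annD_tgt {X Y : DerivedCategory (ModuleCat.{u} R)} {r : R} (h : r ∈ annD Y) (g : X ⟶ Y) :
    r • g = 0 := by
  rw [← Category.comp_id g, ← Linear.comp_smul, mem_annD.1 h, comp_zero]

theorem annD_shift {X : DerivedCategory (ModuleCat.{u} R)} {r : R} (h : r ∈ annD X) (k : ℤ) :
    r ∈ annD (X⟦k⟧) := by
  have := congrArg (fun z => (shiftFunctor _ k).map z) (mem_annD.1 h)
  rw [mem_annD]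
  rwa [Functor.map_smul, Functor.map_zero, CategoryTheory.Functor.map_id] at this

theorem annD_iso {X Y : DerivedCategory (ModuleCat.{u} R)} {r : R} (e : X ≅ Y) (h : r ∈ annD X) :
    r ∈ annD Y := by
  rw [mem_annD, ← cancel_epi e.hom, comp_zero, Linear.comp_smul, Category.comp_id]
  exact annD_src h _

theorem annD_single {M : ModuleCat.{u} R} {n : ℤ} {r : R}
    (h : r ∈ annD ((singleFunctor (ModuleCat.{u} R) n).obj M)) (x : M) : r • x = 0 := by
  rw [mem_annD, ← CategoryTheory.Functor.map_id, ← Functor.map_smul] at h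
  have h2 : r • 𝟙 M = 0 := (singleFunctor (ModuleCat.{u} R) n).map_injective (by
    rw [h, Functor.map_zero])
  exact congrArg (fun z => z.hom x) h2

theorem lemmaZ_aux (I : Ideal R) (N : ℕ) {L : Set (DerivedCategory (ModuleCat.{u} R))}
    (hL : IsLocalizingSub.{u} L) (hI : smod R (ModuleCat.of R (R ⧸ I)) ∈ L) (n : ℕ) :
    ∀ (a : ℤ) (X : DerivedCategory (ModuleCat.{u} R)), X.IsGE a → X.IsLE (a + n - 1) →
      I ^ N ≤ annD X → X ∈ L := by
  induction n with
  | zero =>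
    intro a X h1 h2 _
    exact hL.isZero_mem (TStructure.t.isZero X (a + (0 : ℕ) - 1) a (by simp))
  | succ n ih =>
    intro a X h1 h2 hX
    obtain ⟨A, B, hA, hB, i, p, δ, hT⟩ := TStructure.t.exists_triangle X a (a + 1) rfl
    have hA : A.IsLE a := ⟨hA⟩
    have hB : B.IsGE (a + 1) := ⟨hB⟩
    have hB' : (B⟦(-1 : ℤ)⟧).IsGE (a + 2) := TStructure.t.isGE_shift B (a + 1) (-1) (a + 2)
    have hA' : (A⟦(1 : ℤ)⟧).IsLE (a - 1) := TStructure.t.isLE_shift A a 1 (a - 1)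
    have hX' : X.IsLE (a + n) := by
      have : a + ((n + 1 : ℕ) : ℤ) - 1 = a + n := by push_cast; ring
      rwa [this] at h2
    obtain ⟨p', q', hT'⟩ := exists_invRot hT
    obtain ⟨q'', hT''⟩ := exists_rot hT
    have hAG : A.IsGE a := TStructure.t.isGE₂ _ hT' a
      (TStructure.t.isGE_of_ge (B⟦(-1 : ℤ)⟧) a (a + 2)) h1
    have hBL : B.IsLE (a + n) := TStructure.t.isLE₂ _ hT'' (a + n) hX'
      (TStructure.t.isLE_of_le (A⟦(1 : ℤ)⟧) (a - 1) (a + n))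
    have hBann : I ^ N ≤ annD B := fun r hr => by
      obtain ⟨l, hl⟩ := ex_yo3 hT (r • 𝟙 B) (by
        rw [Linear.comp_smul, Category.comp_id]; exact annD_src (hX hr) _)
      rw [mem_annD, hl, TStructure.t.zero l (a - 1) (a + 1), comp_zero]
    have hAann : I ^ N ≤ annD A := fun r hr => by
      obtain ⟨l, hl⟩ := ex_co2 hT' (r • 𝟙 A) (by
        rw [Linear.smul_comp, Category.id_comp]; exact annD_tgt (hX hr) _)
      rw [mem_annD, hl, TStructure.t.zero l a (a + 2), zero_comp]
    have hBL' : B ∈ L := ih (a + 1) B hB (by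
      rwa [show a + 1 + (n : ℤ) - 1 = a + n by ring]) hBann
    have hAL : A ∈ L := by
      obtain ⟨M, ⟨e⟩⟩ := exists_iso_singleFunctor_obj_of_isGE_of_isLE A a
      have hM : smod R M ∈ L := smod_mem_of_pow hL I hI N M fun r hr x =>
        annD_single (annD_iso e (hAann hr)) x
      exact hL.mem_of_iso (smodShift M a ≪≫ e.symm) (hL.shift_mem _ hM)
    exact hL.mem₂ _ hT hAL hBL'

def BddD (X : DerivedCategory (ModuleCat.{u} R)) : Prop := ∃ a b : ℤ, X.IsGE a ∧ X.IsLE b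

theorem lemmaZ (I : Ideal R) (hfg : I.FG) {L : Set (DerivedCategory (ModuleCat.{u} R))}
    (hL : IsLocalizingSub.{u} L) (hI : smod R (ModuleCat.of R (R ⧸ I)) ∈ L)
    (X : DerivedCategory (ModuleCat.{u} R)) (hX : BddD X) (h : I ≤ (annD X).radical) : X ∈ L := by
  obtain ⟨N, hN⟩ := Ideal.exists_pow_le_of_le_radical_of_fg h hfg
  obtain ⟨a, b, h1, h2⟩ := hX
  refine lemmaZ_aux I N hL hI (b - a + 1).toNat a X h1 ?_ hN
  exact TStructure.t.isLE_of_le X b _ (by have := Int.self_le_toNat (b - a + 1); lia)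

theorem smod_bdd (M : ModuleCat.{u} R) : BddD (smod R M) :=
  ⟨0, 0, inferInstanceAs (((singleFunctor (ModuleCat.{u} R) 0).obj M).IsGE 0),
    inferInstanceAs (((singleFunctor (ModuleCat.{u} R) 0).obj M).IsLE 0)⟩

theorem exists_cn (f : R) (X : DerivedCategory (ModuleCat.{u} R)) :
    ∃ (Z : DerivedCategory (ModuleCat.{u} R)) (q : X ⟶ Z) (δ : Z ⟶ X⟦(1 : ℤ)⟧),
      Triangle.mk (f • 𝟙 X) q δ ∈ distinguishedTriangles := distinguished_cocone_triangle _

noncomputable def cn (f : R) (X : DerivedCategory (ModuleCat.{u} R)) :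
    DerivedCategory (ModuleCat.{u} R) := (exists_cn f X).choose

theorem cn_spec (f : R) (X : DerivedCategory (ModuleCat.{u} R)) :
    ∃ (q : X ⟶ cn f X) (δ : cn f X ⟶ X⟦(1 : ℤ)⟧),
      Triangle.mk (f • 𝟙 X) q δ ∈ distinguishedTriangles := (exists_cn f X).choose_spec

theorem cn_bdd (f : R) {X : DerivedCategory (ModuleCat.{u} R)} (h : BddD X) : BddD (cn f X) := by
  obtain ⟨a, b, h1, h2⟩ := h
  obtain ⟨q, δ, hT⟩ := cn_spec f X
  obtain ⟨q'', hT''⟩ := exists_rot hT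
  refine ⟨a - 1, b, ?_, ?_⟩
  · exact TStructure.t.isGE₂ _ hT'' (a - 1) (TStructure.t.isGE_of_ge X (a - 1) a)
      (TStructure.t.isGE_shift X a 1 (a - 1))
  · have := TStructure.t.isLE_shift X b 1 (b - 1)
    exact TStructure.t.isLE₂ _ hT'' b h2 (TStructure.t.isLE_of_le (X⟦(1 : ℤ)⟧) (b - 1) b)

theorem cn_compact (f : R) {X : DerivedCategory (ModuleCat.{u} R)} (h : IsCompactObj.{u} X) :
    IsCompactObj.{u} (cn f X) := by
  obtain ⟨q, δ, hT⟩ := cn_spec f X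
  exact h.cone hT h

theorem cn_ann_self (f : R) (X : DerivedCategory (ModuleCat.{u} R)) :
    f ∈ (annD (cn f X)).radical := by
  obtain ⟨q, δ, hT⟩ := cn_spec f X
  have h1 : f • q = 0 := by
    have := tri12 hT
    rwa [Linear.smul_comp, Category.id_comp] at this
  have h2 : f • δ = 0 := by
    have := tri31 hT
    rwa [Functor.map_smul, CategoryTheory.Functor.map_id, Linear.comp_smul, Category.comp_id] at this
  obtain ⟨l, hl⟩ := ex_yo3 hT (f • 𝟙 _) (by rw [Linear.comp_smul, Category.comp_id, h1])
  refine ⟨2, ?_⟩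
  rw [mem_annD, pow_two, mul_smul, hl, ← Linear.smul_comp, h2, zero_comp]

theorem cn_ann (f : R) (X : DerivedCategory (ModuleCat.{u} R)) :
    (annD X).radical ≤ (annD (cn f X)).radical := by
  rw [Ideal.radical_le_radical_iff]
  intro r hr
  obtain ⟨q, δ, hT⟩ := cn_spec f X
  obtain ⟨l, hl⟩ := ex_yo3 hT (r • 𝟙 _) (by
    rw [Linear.comp_smul, Category.comp_id]; exact annD_src hr _)
  refine ⟨2, ?_⟩
  rw [mem_annD, pow_two, mul_smul, hl, ← Linear.smul_comp, annD_tgt (annD_shift hr 1), zero_comp]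

theorem cn_orth_bij (f : R) (X W : DerivedCategory (ModuleCat.{u} R)) (h : Orth (cn f X) W)
    (a : X ⟶ W) : (f • a = 0 → a = 0) ∧ ∃ c, a = f • c := by
  obtain ⟨q, δ, hT⟩ := cn_spec f X
  obtain ⟨p', q', hT'⟩ := exists_invRot hT
  constructor
  · intro ha
    obtain ⟨l, hl⟩ := ex_yo2 hT a (by rw [Linear.smul_comp, Category.id_comp, ha])
    rw [hl, h.eq_zero l, comp_zero]
  · obtain ⟨l, hl⟩ := ex_yo2 hT' a (h (-1) _)
    refine ⟨l, ?_⟩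
    rw [hl, Linear.smul_comp, Category.id_comp]

theorem cn_orth_bij' (f : R) (X W : DerivedCategory (ModuleCat.{u} R)) (h : Orth (cn f X) W) (k : ℤ)
    (a : X⟦k⟧ ⟶ W) : (f • a = 0 → a = 0) ∧ ∃ c, a = f • c := by
  let e : X⟦k⟧⟦-k⟧ ≅ X := (shiftFunctorCompIsoId _ k (-k) (by simp)).app X
  have h' : Orth (cn f X) (W⟦-k⟧) := (h.shift 0 (-k)).of_iso ((shiftFunctorZero _ ℤ).app _) (Iso.refl _)
  obtain ⟨h1, c, h2⟩ := cn_orth_bij f X (W⟦-k⟧) h' (e.inv ≫ a⟦-k⟧')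
  constructor
  · intro ha
    apply (shiftFunctor _ (-k)).map_injective
    rw [← cancel_epi e.inv, Functor.map_zero, comp_zero]
    apply h1
    rw [← Linear.comp_smul, ← Functor.map_smul, ha, Functor.map_zero, comp_zero]
  · obtain ⟨c', hc'⟩ := (shiftFunctor _ (-k)).map_surjective (e.hom ≫ c)
    refine ⟨c', ?_⟩
    apply (shiftFunctor _ (-k)).map_injective
    rw [Functor.map_smul, hc', ← Linear.comp_smul, ← h2, Iso.hom_inv_id_assoc]

theorem orth_cn (f : R) (X Y : DerivedCategory (ModuleCat.{u} R)) (h : Orth (cn f X) Y) :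
    Orth X (cn f Y) := by
  intro k g
  obtain ⟨q, δ, hT⟩ := cn_spec f Y
  have h2 : f • δ = 0 := by
    have := tri31 hT
    rwa [Functor.map_smul, CategoryTheory.Functor.map_id, Linear.comp_smul, Category.comp_id] at this
  have h' : Orth (cn f X) (Y⟦(1 : ℤ)⟧) :=
    (h.shift 0 1).of_iso ((shiftFunctorZero _ ℤ).app _) (Iso.refl _)
  have h3 := (cn_orth_bij' f X _ h' k (g ≫ δ)).1 (by rw [← Linear.comp_smul, h2, comp_zero])
  obtain ⟨l, hl⟩ := ex_co3 hT g h3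
  obtain ⟨c, hc⟩ := (cn_orth_bij' f X _ h k l).2
  have h4 := tri12 hT
  rw [Linear.smul_comp, Category.id_comp] at h4
  rw [hl, hc, Linear.smul_comp, ← Linear.comp_smul, h4, comp_zero]

theorem orth_of_orth_cn (f : R) (X Y : DerivedCategory (ModuleCat.{u} R)) (hf : f ∈ annD X)
    (h : Orth X (cn f Y)) : Orth X Y := by
  intro k g
  obtain ⟨q, δ, hT⟩ := cn_spec f Y
  obtain ⟨l, hl⟩ := ex_co2 hT g (h k _)
  rw [hl, Linear.comp_smul, Category.comp_id]
  exact annD_src (annD_shift hf k) l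

noncomputable def kosz (l : List R) (X : DerivedCategory (ModuleCat.{u} R)) :
    DerivedCategory (ModuleCat.{u} R) := l.foldl (fun X f => cn f X) X

theorem kosz_props (l : List R) : ∀ X : DerivedCategory (ModuleCat.{u} R),
    (IsCompactObj.{u} X → IsCompactObj.{u} (kosz l X)) ∧ (BddD X → BddD (kosz l X)) ∧
    (annD X).radical ≤ (annD (kosz l X)).radical ∧ (∀ f ∈ l, f ∈ (annD (kosz l X)).radical) ∧
    ∀ Y, Orth (kosz l X) Y → ∃ Y', Orth X Y' ∧
      ∀ W, (∀ f ∈ l, f ∈ annD W) → Orth W Y' → Orth W Y := by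
  induction l with
  | nil =>
    intro X
    exact ⟨id, id, le_rfl, by simp, fun Y hY => ⟨Y, hY, fun W _ h => h⟩⟩
  | cons f l ih =>
    intro X
    obtain ⟨h1, h2, h3, h4, h5⟩ := ih (cn f X)
    refine ⟨fun h => h1 (cn_compact f h), fun h => h2 (cn_bdd f h), (cn_ann f X).trans h3, ?_, ?_⟩
    · intro g hg
      rcases List.mem_cons.1 hg with rfl | hg
      · exact h3 (cn_ann_self _ X)
      · exact h4 g hg
    · intro Y hY
      obtain ⟨Y', h6, h7⟩ := h5 Y hY
      refine ⟨cn f Y', orth_cn f X Y' h6, fun W hW hW' => ?_⟩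
      exact h7 W (fun g hg => hW g (List.mem_cons_of_mem _ hg))
        (orth_of_orth_cn f W Y' (hW f List.mem_cons_self) hW')

theorem part2 (I : Ideal R) (hI : I.FG) : ∃ C : DerivedCategory (ModuleCat.{u} R),
    IsCompactObj.{u} C ∧ Loc.{u} {smod R (ModuleCat.of R (R ⧸ I))} = Loc.{u} {C} := by
  obtain ⟨s, rfl⟩ := hI
  obtain ⟨h1, h2, h3, h4, h5⟩ := kosz_props s.toList (RR R)
  have hC := h1 isCompactObj_RR
  refine ⟨_, hC, Set.Subset.antisymm ?_ ?_⟩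
  · refine loc_singleton_le (loc_isLocalizing _) ?_
    rw [mem_loc_iff hC (smallHom_DR _)]
    intro Y hY
    obtain ⟨Y', h6, h7⟩ := h5 Y hY
    refine h7 _ ?_ (orth_loc h6 (mem_loc_RR _))
    intro f hf
    rw [mem_annD]
    apply smod_smul_zero
    intro x
    obtain ⟨x, rfl⟩ := Submodule.Quotient.mk_surjective _ x
    change Submodule.Quotient.mk (f • x) = 0
    rw [Submodule.Quotient.mk_eq_zero]
    exact Ideal.mul_mem_right _ _ (Ideal.subset_span (by simpa using hf))
  · refine loc_singleton_le (loc_isLocalizing _) ?_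
    refine lemmaZ _ ⟨s, rfl⟩ (loc_isLocalizing _) (mem_loc_self _) _ (h2 (smod_bdd _)) ?_
    refine Ideal.span_le.2 fun f hf => h4 f (by simpa using hf)

end Koszul

section MatCpx

open DerivedCategory

def mact {R : Type*} [CommRing R] {a b : ℕ} (A : Matrix (Fin b) (Fin a) R) (M : Type*) [AddCommGroup M] [Module R M] :
    (Fin a → M) →ₗ[R] (Fin b → M) :=
  LinearMap.pi fun j => ∑ k, A j k • LinearMap.proj k

theorem mact_apply {R : Type*} [CommRing R] {a b : ℕ} (A : Matrix (Fin b) (Fin a) R) (M : Type*) [AddCommGroup M] [Module R M]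
    (x : Fin a → M) (j : Fin b) : mact A M x j = ∑ k, A j k • x k := by
  simp [mact]

theorem mact_mul {R : Type*} [CommRing R] {a b c : ℕ} (A : Matrix (Fin b) (Fin a) R)
    (B : Matrix (Fin c) (Fin b) R) (M : Type*) [AddCommGroup M] [Module R M] (x : Fin a → M) :
    mact B M (mact A M x) = mact (B * A) M x := by
  ext j
  simp only [mact_apply, Matrix.mul_apply, Finset.smul_sum, Finset.sum_smul, smul_smul]
  exact Finset.sum_comm

theorem mact_zero {R : Type*} [CommRing R] {a b : ℕ} (M : Type*) [AddCommGroup M] [Module R M] :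
    mact (0 : Matrix (Fin b) (Fin a) R) M = 0 := by
  ext x j
  simp [mact_apply]

theorem mact_nat {R : Type*} [CommRing R] {a b : ℕ} (A : Matrix (Fin b) (Fin a) R) {M N : Type*} [AddCommGroup M]
    [Module R M] [AddCommGroup N] [Module R N] (f : M →ₗ[R] N) (x : Fin a → M) :
    mact A N (fun k => f (x k)) = fun j => f (mact A M x j) := by
  ext j
  simp [mact_apply]

structure MData (S : Type*) [CommRing S] where
  r : ℤ → ℕ
  D : ∀ i j : ℤ, Matrix (Fin (r j)) (Fin (r i)) S
  shape : ∀ i j, i + 1 ≠ j → D i j = 0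
  sq : ∀ i j k, D j k * D i j = 0
  lo : ℤ
  hi : ℤ
  bd : ∀ i, (i < lo ∨ hi < i) → r i = 0

variable {R : Type u} [CommRing R]

def powF (n : ℕ) : ModuleCat.{u} R ⥤ ModuleCat.{u} R where
  obj M := ModuleCat.of R (Fin n → M)
  map f := ModuleCat.ofHom (LinearMap.compLeft f.hom (Fin n))

def diagSum (n : ℕ) (M : Type*) [AddCommGroup M] [Module R M] : (Fin n → Fin n → M) →ₗ[R] M :=
  ∑ k : Fin n, LinearMap.proj (R := R) (φ := fun _ => M) k ∘ₗ LinearMap.proj (φ := fun _ => (Fin n → M)) k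

theorem diagSum_apply (n : ℕ) (M : Type*) [AddCommGroup M] [Module R M] (x : Fin n → Fin n → M) :
    diagSum (R := R) n M x = ∑ k, x k k := by
  simp only [diagSum, LinearMap.sum_apply, LinearMap.comp_apply, LinearMap.proj_apply]

theorem diagSum_single (n : ℕ) (M : Type*) [AddCommGroup M] [Module R M] (x : Fin n → M) (l : Fin n) :
    diagSum (R := R) n M (Pi.single l x) = x l := by
  rw [diagSum_apply, Finset.sum_eq_single l]
  · simp
  · intro b _ hb
    simp [Pi.single_eq_of_ne hb]
  · simp

theorem diagSum_single' (n : ℕ) (M : Type*) [AddCommGroup M] [Module R M] (x : Fin n → M) :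
    diagSum (R := R) n (Fin n → M) (fun l k => (Pi.single k (x l) : Fin n → M)) = x := by
  rw [diagSum_apply]
  exact Finset.univ_sum_single x

theorem diagSum_nat (n : ℕ) {M N : Type*} [AddCommGroup M] [Module R M] [AddCommGroup N] [Module R N]
    (f : M →ₗ[R] N) (x : Fin n → Fin n → M) :
    diagSum (R := R) n N (fun k l => f (x k l)) = f (diagSum (R := R) n M x) := by
  rw [diagSum_apply, diagSum_apply, map_sum]

def powAdj (n : ℕ) : powF (R := R) n ⊣ powF n := Adjunction.mkOfUnitCounit
  { unit :=
      { app := fun M => ModuleCat.ofHom (LinearMap.pi fun k => LinearMap.single R (fun _ => (M : Type u)) k)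
        naturality := fun M N f => by
          ext m
          funext k l
          change (Pi.single k (f m) : Fin n → N) l = f ((Pi.single k m : Fin n → M) l)
          by_cases h : l = k
          · subst h; simp
          · simp [Pi.single_eq_of_ne h] }
    counit :=
      { app := fun M => ModuleCat.ofHom (diagSum n M)
        naturality := fun M N f => by
          refine ModuleCat.hom_ext (LinearMap.ext fun x => ?_)
          exact diagSum_nat n f.hom x }
    left_triangle := by
      ext M : 2
      refine ModuleCat.hom_ext (LinearMap.ext fun x => ?_)
      exact diagSum_single' n M x
    right_triangle := by
      ext M : 2
      refine ModuleCat.hom_ext (LinearMap.ext fun x => ?_)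
      funext l
      exact diagSum_single n M x l }

instance (n : ℕ) : (powF (R := R) n).IsLeftAdjoint := ⟨_, ⟨powAdj n⟩⟩
instance (n : ℕ) : (powF (R := R) n).IsRightAdjoint := ⟨_, ⟨powAdj n⟩⟩
instance (n : ℕ) : (powF (R := R) n).Additive where
instance (n : ℕ) : PreservesColimitsOfSize.{u, u} (powF (R := R) n) := (powAdj n).leftAdjoint_preservesColimits
instance (n : ℕ) : PreservesFiniteColimits (powF (R := R) n) :=
  ⟨fun J _ _ => by have := (powAdj (R := R) n).leftAdjoint_preservesColimits.{0, 0}; infer_instance⟩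
instance (n : ℕ) : PreservesFiniteLimits (powF (R := R) n) :=
  ⟨fun J _ _ => by have := (powAdj (R := R) n).rightAdjoint_preservesLimits.{0, 0}; infer_instance⟩

def cpx (D : MData R) (M : ModuleCat.{u} R) : CochainComplex (ModuleCat.{u} R) ℤ where
  X i := (powF (D.r i)).obj M
  d i j := ModuleCat.ofHom (mact (D.D i j) M)
  shape i j h := by
    rw [D.shape i j h, mact_zero]
    rfl
  d_comp_d' i j k _ _ := by
    refine ModuleCat.hom_ext (LinearMap.ext fun x => ?_)
    refine (mact_mul _ _ _ _).trans ?_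
    rw [D.sq, mact_zero]
    rfl

def cpxF (D : MData R) : ModuleCat.{u} R ⥤ CochainComplex (ModuleCat.{u} R) ℤ where
  obj M := cpx D M
  map {M N} f :=
    { f := fun i => (powF (D.r i)).map f
      comm' := fun i j _ => by
        refine ModuleCat.hom_ext (LinearMap.ext fun x => ?_)
        exact mact_nat (D.D i j) f.hom x }

instance (D : MData R) : (cpxF D).Additive where

theorem cpx_bd (D : MData R) (M : ModuleCat.{u} R) (i : ℤ) (h : i < D.lo ∨ D.hi < i) :
    IsZero ((cpx D M).X i) := by
  have : IsEmpty (Fin (D.r i)) := by rw [D.bd i h]; infer_instance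
  have : Subsingleton ((cpx D M).X i) := inferInstanceAs (Subsingleton (Fin (D.r i) → M))
  exact ModuleCat.isZero_of_subsingleton _

theorem good_cpx (D : MData R) : GoodFun (cpxF D) where
  ses S hS := HomologicalComplex.shortExact_of_degreewise_shortExact _ fun i =>
    hS.map_of_exact (powF (D.r i))
  pres ι := HomologicalComplex.preservesColimitsOfShape_of_eval _ fun i =>
    inferInstanceAs (PreservesColimitsOfShape (Discrete ι) (powF (D.r i)))
  bdd := ⟨D.hi, fun M m h => cpx_bd D M m (Or.inr h)⟩

variable [HasDerivedCategory.{w'} (ModuleCat.{u} R)]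

theorem cpx_bddD (D : MData R) (M : ModuleCat.{u} R) : BddD (Q.obj (cpx D M)) := by
  have h1 : (cpx D M).IsStrictlyGE D.lo := by
    rw [CochainComplex.isStrictlyGE_iff]
    exact fun i hi => cpx_bd D M i (Or.inl hi)
  have h2 : (cpx D M).IsStrictlyLE D.hi := by
    rw [CochainComplex.isStrictlyLE_iff]
    exact fun i hi => cpx_bd D M i (Or.inr hi)
  exact ⟨D.lo, D.hi, inferInstance, inferInstance⟩

theorem cpx_mem_loc (D : MData R) (M : ModuleCat.{u} R) :
    Q.obj (cpx D M) ∈ Loc.{u} {Q.obj (cpx D (ModuleCat.of R R))} := by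
  refine lemmaA (good_cpx D) (loc_isLocalizing _) {⊥} ⟨⊥, rfl⟩ ?_ ?_ M ?_
  · rintro _ rfl _ rfl
    exact ⟨_, rfl, le_rfl, le_rfl⟩
  · rintro _ rfl
    refine (loc_isLocalizing _).mem_of_iso ?_ (mem_loc_self _)
    exact Q.mapIso ((cpxF D).mapIso (LinearEquiv.toModuleIso
      (Submodule.quotEquivOfEqBot (⊥ : Ideal R) rfl).symm))
  · intro x
    exact ⟨_, rfl, fun r hr => by rw [(Submodule.mem_bot R).1 hr, zero_smul]⟩

end MatCpx

section PerfModel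

open DerivedCategory

variable {R : Type u} [CommRing R]

def FFM (M : ModuleCat.{u} R) : Prop := ∃ n : ℕ, Nonempty (M ≃ₗ[R] (Fin n → R))

theorem FFM.of_iso {M N : ModuleCat.{u} R} (h : FFM M) (e : M ≅ N) : FFM N := by
  obtain ⟨n, ⟨f⟩⟩ := h
  exact ⟨n, ⟨e.toLinearEquiv.symm.trans f⟩⟩

theorem FFM.of_isZero {M : ModuleCat.{u} R} (h : IsZero M) : FFM M := by
  have := ModuleCat.subsingleton_of_isZero h
  exact ⟨0, ⟨{ toFun := 0, invFun := 0, map_add' := by simp, map_smul' := by simp, left_inv := fun x => Subsingleton.elim _ _, right_inv := fun x => Subsingleton.elim _ _ }⟩⟩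

theorem FFM.biprod {M N : ModuleCat.{u} R} (h : FFM M) (h' : FFM N) : FFM (M ⊞ N) := by
  obtain ⟨m, ⟨f⟩⟩ := h
  obtain ⟨n, ⟨g⟩⟩ := h'
  refine FFM.of_iso (M := ModuleCat.of R (M × N)) ⟨m + n, ⟨?_⟩⟩ (ModuleCat.biprodIsoProd M N).symm
  exact (f.prodCongr g).trans ((LinearEquiv.sumArrowLequivProdArrow (Fin m) (Fin n) R R).symm.trans
    (LinearEquiv.funCongrLeft R R finSumFinEquiv.symm))

theorem FFM.ring : FFM (ModuleCat.of R R) := ⟨1, ⟨(LinearEquiv.funUnique (Fin 1) R R).symm⟩⟩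

theorem FFM.projective {M : ModuleCat.{u} R} (h : FFM M) : Projective M := by
  obtain ⟨m, ⟨f⟩⟩ := h
  have : Module.Projective R M := Module.Projective.of_equiv f.symm
  exact (IsProjective.iff_projective (R := R) M).1 this

def FF (K : CochainComplex (ModuleCat.{u} R) ℤ) : Prop :=
  (∀ i, FFM (K.X i)) ∧ ∃ a b : ℤ, ∀ i, (i < a ∨ b < i) → IsZero (K.X i)

theorem FF.kproj {K : CochainComplex (ModuleCat.{u} R) ℤ} (h : FF K) : K.IsKProjective := by
  obtain ⟨h, a, b, hb⟩ := h
  have : K.IsStrictlyLE b := by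
    rw [CochainComplex.isStrictlyLE_iff]
    exact fun i hi => hb i (Or.inr hi)
  have := fun i => (h i).projective
  exact CochainComplex.isKProjective_of_projective _ b

theorem FF.shift {K : CochainComplex (ModuleCat.{u} R) ℤ} (h : FF K) (n : ℤ) : FF (K⟦n⟧) := by
  obtain ⟨h, a, b, hb⟩ := h
  refine ⟨fun i => h (i + n), a - n, b - n, fun i hi => hb (i + n) ?_⟩
  omega

theorem FF.cone {K L : CochainComplex (ModuleCat.{u} R) ℤ} (hK : FF K) (hL : FF L) (f : K ⟶ L) :
    FF (CochainComplex.mappingCone f) := by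
  obtain ⟨h, a, b, hb⟩ := hK
  obtain ⟨h', a', b', hb'⟩ := hL
  refine ⟨fun i => ((h (i+1)).biprod (h' i)).of_iso
    (HomologicalComplex.homotopyCofiber.XIsoBiprod f i (i + 1) rfl).symm, min (a - 1) a', max b b',
    fun i hi => ?_⟩
  refine IsZero.of_iso ?_ (HomologicalComplex.homotopyCofiber.XIsoBiprod f i (i + 1) rfl)
  rw [biprod_isZero_iff]
  exact ⟨hb _ (by omega), hb' _ (by omega)⟩

theorem FF.exists_MData {K : CochainComplex (ModuleCat.{u} R) ℤ} (hK : FF K) :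
    ∃ D : MData R, Nonempty (K ≅ cpx D (ModuleCat.of R R)) := by
  obtain ⟨h, a, b, hb⟩ := hK
  have h' : ∀ i, ∃ n : ℕ, Nonempty (K.X i ≃ₗ[R] (Fin n → R)) ∧ ((i < a ∨ b < i) → n = 0) := by
    intro i
    by_cases hi : i < a ∨ b < i
    · have := ModuleCat.subsingleton_of_isZero (hb i hi)
      exact ⟨0, ⟨{ toFun := 0, invFun := 0, map_add' := by simp, map_smul' := by simp, left_inv := fun x => Subsingleton.elim _ _, right_inv := fun x => Subsingleton.elim _ _ }⟩, fun _ => rfl⟩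
    · obtain ⟨n, hn⟩ := h i
      exact ⟨n, hn, fun h => absurd h hi⟩
  choose r e hr using h'
  let e' := fun i => (e i).some
  let dd : ∀ i j, (Fin (r i) → R) →ₗ[R] (Fin (r j) → R) := fun i j =>
    (e' j).toLinearMap ∘ₗ (K.d i j).hom ∘ₗ (e' i).symm.toLinearMap
  let D : MData R :=
    { r := r
      D := fun i j => LinearMap.toMatrix' (dd i j)
      shape := fun i j hij => by
        have : K.d i j = 0 := K.shape i j hij
        simp [dd, this]
      sq := fun i j k => by
        rw [← LinearMap.toMatrix'_comp]
        have : dd j k ∘ₗ dd i j = 0 := by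
          ext1 x
          ext1
          have : ∀ y, (K.d j k).hom ((K.d i j).hom y) = 0 := fun y => by
            have := K.d_comp_d i j k
            exact congrArg (fun f => f.hom y) this
          simp [dd, this]
        rw [this, map_zero]
      lo := a
      hi := b
      bd := hr }
  refine ⟨D, ⟨HomologicalComplex.Hom.isoOfComponents (fun i => (e' i).toModuleIso) fun i j _ => ?_⟩⟩
  refine ModuleCat.hom_ext (LinearMap.ext fun x => ?_)
  have key : mact (D.D i j) R (e' i x) = e' j ((K.d i j).hom x) := by
    have : mact (D.D i j) R (e' i x) = Matrix.toLin' (LinearMap.toMatrix' (dd i j)) (e' i x) := by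
      ext k
      rw [mact_apply, Matrix.toLin'_apply]
      rfl
    rw [this, Matrix.toLin'_toMatrix']
    simp [dd]
  exact key

variable [HasDerivedCategory.{w'} (ModuleCat.{u} R)]

variable (R) in
def PF : Set (DerivedCategory (ModuleCat.{u} R)) :=
  {X | IsCompactObj.{u} X ∧ ∃ K, FF K ∧ Nonempty (X ≅ Q.obj K)}

theorem PF_triSub : IsTriSub (PF R) where
  zero_mem := by
    refine ⟨isCompactObj_of_isZero (isZero_zero _), 0, ⟨fun i => FFM.of_isZero ?_, 0, 0, fun i _ => ?_⟩, ⟨?_⟩⟩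
    · exact (HomologicalComplex.eval _ _ i).map_isZero (isZero_zero _)
    · exact (HomologicalComplex.eval _ _ i).map_isZero (isZero_zero _)
    · exact (isZero_zero _).iso (Q.map_isZero (isZero_zero _))
  mem_of_iso := fun e ⟨h, K, hK, ⟨e'⟩⟩ => ⟨h.of_iso e, K, hK, ⟨e.symm ≪≫ e'⟩⟩
  shift_mem := fun n X ⟨h, K, hK, ⟨e⟩⟩ => ⟨h.shift n, K⟦n⟧, hK.shift n,
    ⟨(shiftFunctor _ n).mapIso e ≪≫ ((Q.commShiftIso n).app K).symm⟩⟩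
  cone_mem := by
    rintro Tr hTr ⟨h, K, hK, ⟨e⟩⟩ ⟨h', L, hL, ⟨e'⟩⟩
    refine ⟨h.cone hTr h', ?_⟩
    have := hK.kproj
    obtain ⟨f, hf⟩ := kproj_full K L (e.inv ≫ Tr.mor₁ ≫ e'.hom)
    refine ⟨_, hK.cone hL f, ⟨?_⟩⟩
    have ee := isoTriangleOfIso₁₂ Tr _ hTr (DerivedCategory.mappingCone_triangle_distinguished f) e e' (by
      have : Tr.mor₁ ≫ e'.hom = e.hom ≫ Q.map f := by rw [← hf]; simp
      exact this)
    exact Triangle.π₃.mapIso ee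

theorem RR_mem_PF : RR R ∈ PF R := by
  refine ⟨isCompactObj_RR, sglR R 0, ⟨fun i => ?_, 0, 0, fun i hi => ?_⟩, RR_iso⟩
  · by_cases h : i = 0
    · subst h
      exact FFM.ring.of_iso (HomologicalComplex.singleObjXSelf _ 0 _).symm
    · exact FFM.of_isZero (HomologicalComplex.isZero_single_obj_X _ _ _ _ h)
  · exact HomologicalComplex.isZero_single_obj_X _ _ _ _ (by omega)

theorem compact_model (C : DerivedCategory (ModuleCat.{u} R)) (hC : IsCompactObj.{u} C) :
    ∃ D : MData R, IsCompactObj.{u} (Q.obj (cpx D (ModuleCat.of R R))) ∧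
      Loc.{u} {C} = Loc.{u} {Q.obj (cpx D (ModuleCat.of R R))} := by
  obtain ⟨Z, ⟨hZ, K, hK, ⟨e⟩⟩, h⟩ := neeman smallHom_DR (PF_triSub (R := R)) (fun X h => h.1) (RR R) RR_mem_PF
    mem_loc_RR C hC
  obtain ⟨D, ⟨e'⟩⟩ := hK.exists_MData
  have e2 : Z ≅ Q.obj (cpx D (ModuleCat.of R R)) := e ≪≫ Q.mapIso e'
  refine ⟨D, hZ.of_iso e2, h.trans (Set.Subset.antisymm ?_ ?_)⟩
  · exact loc_singleton_le (loc_isLocalizing _) ((loc_isLocalizing _).mem_of_iso e2.symm (mem_loc_self _))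
  · exact loc_singleton_le (loc_isLocalizing _) ((loc_isLocalizing _).mem_of_iso e2 (mem_loc_self _))

end PerfModel

section LinAlg

theorem gen_inv {k : Type*} [Field k] {m n : ℕ} (A : Matrix (Fin m) (Fin n) k) :
    ∃ B : Matrix (Fin n) (Fin m) k, A * B * A = A := by
  let d := Matrix.toLin' A
  obtain ⟨g0, hg0⟩ := d.rangeRestrict.exists_rightInverse_of_surjective d.range_rangeRestrict
  obtain ⟨q, hq⟩ := (LinearMap.range d).subtype.exists_leftInverse_of_injective (Submodule.ker_subtype _)
  refine ⟨LinearMap.toMatrix' (g0 ∘ₗ q), ?_⟩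
  apply Matrix.toLin'.injective
  rw [Matrix.toLin'_mul, Matrix.toLin'_mul, Matrix.toLin'_toMatrix']
  ext1 x
  ext1
  have h1 : q (d (Pi.single x 1)) = d.rangeRestrict (Pi.single x 1) :=
    congrArg (fun f => f (d.rangeRestrict (Pi.single x 1))) hq
  have h2 : d.rangeRestrict (g0 (d.rangeRestrict (Pi.single x 1))) = d.rangeRestrict (Pi.single x 1) :=
    congrArg (fun f => f (d.rangeRestrict (Pi.single x 1))) hg0
  change d (g0 (q (d (Pi.single x 1)))) = d (Pi.single x 1)
  rw [h1]
  exact congrArg Subtype.val h2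

def Fracs {S k : Type*} [CommRing S] [Field k] (π : S →+* k) : Prop :=
  ∀ {ι : Type} [Finite ι] (x : ι → k), ∃ s, π s ≠ 0 ∧ ∃ y : ι → S, ∀ i, π (y i) = π s * x i

theorem fracs_quot {S : Type*} [CommRing S] (p : Ideal S) [p.IsPrime] :
    Fracs ((algebraMap (S ⧸ p) (FractionRing (S ⧸ p))).comp (Ideal.Quotient.mk p)) := by
  intro ι _ x
  obtain ⟨b, hb⟩ := IsLocalization.exist_integer_multiples_of_finite (nonZeroDivisors (S ⧸ p)) x
  obtain ⟨s, hs⟩ := Ideal.Quotient.mk_surjective (b : S ⧸ p)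
  refine ⟨s, ?_, ?_⟩
  · rw [RingHom.comp_apply, hs]
    exact IsLocalization.to_map_ne_zero_of_mem_nonZeroDivisors _ le_rfl b.2
  · have : ∀ i, ∃ y : S, ((algebraMap (S ⧸ p) (FractionRing (S ⧸ p))).comp (Ideal.Quotient.mk p)) y =
      ((algebraMap (S ⧸ p) (FractionRing (S ⧸ p))).comp (Ideal.Quotient.mk p)) s * x i := by
      intro i
      obtain ⟨z, hz⟩ := hb i
      obtain ⟨y, hy⟩ := Ideal.Quotient.mk_surjective z
      refine ⟨y, ?_⟩
      rw [RingHom.comp_apply, hy, hz, RingHom.comp_apply, hs, Algebra.smul_def]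
    exact ⟨fun i => (this i).choose, fun i => (this i).choose_spec⟩

theorem functional_apply {k : Type*} [Field k] {n : ℕ} (f : (Fin n → k) →ₗ[k] k) (x : Fin n → k) :
    f x = ∑ c, x c * f (Pi.single c 1) := by
  conv_lhs => rw [pi_eq_sum_univ' x]
  rw [map_sum]
  exact Finset.sum_congr rfl fun c _ => by rw [map_smul, smul_eq_mul]

theorem dich {S k : Type*} [CommRing S] [Field k] (π : S →+* k) (hπ : Fracs π) (D : MData S) :
    (∃ (i : ℤ) (v φ : Fin (D.r i) → S), (∀ a, π ((D.D i (i + 1)).mulVec v a) = 0) ∧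
      (∀ a, π (Matrix.vecMul φ (D.D (i - 1) i) a) = 0) ∧ π (φ ⬝ᵥ v) ≠ 0) ∨
    ∃ G : ∀ i j : ℤ, Matrix (Fin (D.r j)) (Fin (D.r i)) S,
      ∀ j, π (D.D (j - 1) j * G j (j - 1) + G (j + 1) j * D.D j (j + 1)).det ≠ 0 := by
  let E : ∀ i j : ℤ, Matrix (Fin (D.r j)) (Fin (D.r i)) k := fun i j => (D.D i j).map π
  have hE : ∀ i j l, E j l * E i j = 0 := fun i j l => by
    rw [← Matrix.map_mul, D.sq]
    ext
    simp
  by_cases H : ∃ (i : ℤ) (x : Fin (D.r i) → k), (E i (i + 1)).mulVec x = 0 ∧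
      x ∉ LinearMap.range (Matrix.toLin' (E (i - 1) i))
  · left
    obtain ⟨i, x, hx, hxr⟩ := H
    obtain ⟨f, hf, hf'⟩ := Submodule.exists_le_ker_of_notMem hxr
    obtain ⟨s, hs, v, hv⟩ := hπ x
    obtain ⟨t, ht, φ, hφ⟩ := hπ (fun a => f (Pi.single a 1))
    refine ⟨i, v, φ, fun a => ?_, fun a => ?_, ?_⟩
    · have h1 : π ((D.D i (i + 1)).mulVec v a) = π s * (E i (i + 1)).mulVec x a := by
        simp only [Matrix.mulVec, dotProduct, map_sum, map_mul, hv, Finset.mul_sum, E, Matrix.map_apply]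
        exact Finset.sum_congr rfl fun _ _ => by ring
      rw [h1, hx]
      simp
    · have h1 : π (Matrix.vecMul φ (D.D (i - 1) i) a) =
          π t * f (Matrix.toLin' (E (i - 1) i) (Pi.single a 1)) := by
        rw [functional_apply f (Matrix.toLin' (E (i - 1) i) (Pi.single a 1))]
        simp only [Matrix.vecMul, dotProduct, map_sum, map_mul, hφ, Finset.mul_sum]
        refine Finset.sum_congr rfl fun c _ => ?_
        have h2 : Matrix.toLin' (E (i - 1) i) (Pi.single a 1) c = π (D.D (i - 1) i c a) := by
          simp [E]
        rw [h2]
        ring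
      rw [h1, show f (Matrix.toLin' (E (i - 1) i) (Pi.single a 1)) = 0 from hf' ⟨_, rfl⟩, mul_zero]
    · have h1 : π (φ ⬝ᵥ v) = π t * π s * f x := by
        rw [functional_apply f x]
        simp only [dotProduct, map_sum, map_mul, hφ, hv, Finset.mul_sum]
        exact Finset.sum_congr rfl fun c _ => by ring
      rw [h1]
      exact mul_ne_zero (mul_ne_zero ht hs) hf
  · right
    push Not at H
    have hG : ∀ i j : ℤ, ∃ (G : Matrix (Fin (D.r j)) (Fin (D.r i)) S) (s : S), π s ≠ 0 ∧
        E j i * G.map π * E j i = π s • E j i := by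
      intro i j
      obtain ⟨B, hB⟩ := gen_inv (E j i)
      obtain ⟨s, hs, y, hy⟩ := hπ (fun c : Fin (D.r j) × Fin (D.r i) => B c.1 c.2)
      refine ⟨Matrix.of fun a b => y (a, b), s, hs, ?_⟩
      have : (Matrix.of fun a b => y (a, b)).map π = π s • B := by
        ext a b
        exact hy (a, b)
      rw [this, Matrix.mul_smul, Matrix.smul_mul, hB]
    choose G s hs hG using hG
    refine ⟨G, fun j hdet => ?_⟩
    let V : Matrix (Fin (D.r j)) (Fin (D.r j)) k :=
      E (j - 1) j * (G j (j - 1)).map π + (G (j + 1) j).map π * E j (j + 1)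
    have hV : V = (D.D (j - 1) j * G j (j - 1) + G (j + 1) j * D.D j (j + 1)).map π := by
      rw [Matrix.map_add _ (fun a b => map_add π a b), Matrix.map_mul, Matrix.map_mul]
    have hVd : V.det = 0 := by
      rw [hV, ← hdet, RingHom.map_det]
      rfl
    obtain ⟨x, hx0, hx⟩ := Matrix.exists_mulVec_eq_zero_iff.2 hVd
    apply hx0
    have h1 : E j (j + 1) * V = π (s (j + 1) j) • E j (j + 1) := by
      rw [Matrix.mul_add, ← Matrix.mul_assoc, hE, Matrix.zero_mul, zero_add, ← Matrix.mul_assoc, hG]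
    have h2 : (E j (j + 1)).mulVec x = 0 := by
      have := congrArg (fun A => A.mulVec x) h1
      simp only [← Matrix.mulVec_mulVec, hx, Matrix.mulVec_zero, Matrix.smul_mulVec] at this
      exact (smul_eq_zero.1 this.symm).resolve_left (hs _ _)
    obtain ⟨y, hy⟩ := H j x h2
    rw [Matrix.toLin'_apply] at hy
    have h3 : V * E (j - 1) j = π (s j (j - 1)) • E (j - 1) j := by
      rw [Matrix.add_mul, Matrix.mul_assoc _ _ (E (j - 1) j), Matrix.mul_assoc _ _ (E (j - 1) j), hE,
        Matrix.mul_zero, add_zero, ← Matrix.mul_assoc, hG]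
    have := congrArg (fun A => A.mulVec y) h3
    simp only [← Matrix.mulVec_mulVec, hy, hx, Matrix.smul_mulVec] at this
    exact (smul_eq_zero.1 this.symm).resolve_left (hs _ _)

def MData.map {S R : Type*} [CommRing S] [CommRing R] (f : S →+* R) (D : MData S) : MData R where
  r := D.r
  D i j := (D.D i j).map f
  shape i j h := by rw [D.shape i j h]; ext; simp
  sq i j k := by rw [← Matrix.map_mul, D.sq]; ext; simp
  lo := D.lo
  hi := D.hi
  bd := D.bd

theorem MData.exists_noeth {R : Type u} [CommRing R] (D : MData R) :
    ∃ (S : Subalgebra ℤ R) (D0 : MData S), IsNoetherianRing S ∧ D = D0.map (algebraMap S R) := by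
  let E : Set R := ⋃ i ∈ Finset.Icc D.lo D.hi, ⋃ j ∈ Finset.Icc D.lo D.hi,
    Set.range fun c : Fin (D.r j) × Fin (D.r i) => D.D i j c.1 c.2
  have hfin : E.Finite := by
    refine Set.Finite.biUnion (Finset.finite_toSet _) fun i _ => ?_
    refine Set.Finite.biUnion (Finset.finite_toSet _) fun j _ => ?_
    exact Set.finite_range _
  have hmem : ∀ i j a b, D.D i j a b ∈ Algebra.adjoin ℤ E := by
    intro i j a b
    apply Algebra.subset_adjoin
    have hne : ∀ i, Fin (D.r i) → i ∈ Finset.Icc D.lo D.hi := fun i a => by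
      rw [Finset.mem_Icc]
      by_contra h
      have h2 := D.bd i (by omega)
      rw [h2] at a
      exact a.elim0
    exact Set.mem_biUnion (hne i b) (Set.mem_biUnion (hne j a) ⟨(a, b), rfl⟩)
  let D0 : MData (Algebra.adjoin ℤ E) :=
    { r := D.r
      D := fun i j => Matrix.of fun a b => ⟨D.D i j a b, hmem i j a b⟩
      shape := fun i j h => by
        ext a b
        exact congrFun (congrFun (D.shape i j h) a) b
      sq := fun i j k => by
        ext a b
        have h := congrFun (congrFun (D.sq i j k) a) b
        rw [Matrix.mul_apply] at h ⊢
        have h2 := map_sum (Algebra.adjoin ℤ E).val (fun c => (⟨D.D j k a c, hmem j k a c⟩ * ⟨D.D i j c b, hmem i j c b⟩ : Algebra.adjoin ℤ E)) Finset.univ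
        refine h2.trans ?_
        exact h
      lo := D.lo
      hi := D.hi
      bd := D.bd }
  refine ⟨Algebra.adjoin ℤ E, D0, ?_, rfl⟩
  have : Algebra.FiniteType ℤ (Algebra.adjoin ℤ E) := by
    rw [← Subalgebra.fg_iff_finiteType]
    exact ⟨hfin.toFinset, by simp⟩
  exact Algebra.FiniteType.isNoetherianRing ℤ _

theorem aeval_intertwine {R : Type*} [CommRing R] {m n : ℕ} (A : Matrix (Fin m) (Fin m) R)
    (B : Matrix (Fin n) (Fin n) R) (C : Matrix (Fin n) (Fin m) R) (h : B * C = C * A) (q : Polynomial R) :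
    Polynomial.aeval B q * C = C * Polynomial.aeval A q := by
  induction q using Polynomial.induction_on' with
  | add p q hp hq => rw [map_add, map_add, Matrix.add_mul, Matrix.mul_add, hp, hq]
  | monomial d a =>
    rw [Polynomial.aeval_monomial, Polynomial.aeval_monomial, ← Algebra.smul_def, ← Algebra.smul_def,
      Matrix.smul_mul, Matrix.mul_smul]
    congr 1
    induction d with
    | zero => simp
    | succ d ih => rw [pow_succ, pow_succ, Matrix.mul_assoc, h, ← Matrix.mul_assoc, ih, Matrix.mul_assoc]

end LinAlg

section ChainMaps

open DerivedCategory

variable {R : Type u} [CommRing R]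

theorem mact_one {n : ℕ} (M : Type*) [AddCommGroup M] [Module R M] (x : Fin n → M) :
    mact (1 : Matrix (Fin n) (Fin n) R) M x = x := by
  ext j
  rw [mact_apply, Finset.sum_eq_single j]
  · simp
  · intro b _ hb
    rw [Matrix.one_apply_ne (Ne.symm hb), zero_smul]
  · simp

theorem mact_smul {m n : ℕ} (c : R) (A : Matrix (Fin m) (Fin n) R) (M : Type*) [AddCommGroup M] [Module R M]
    (x : Fin n → M) : mact (c • A) M x = c • mact A M x := by
  ext j
  simp [mact_apply, Finset.smul_sum, mul_smul]

theorem mact_add {m n : ℕ} (A B : Matrix (Fin m) (Fin n) R) (M : Type*) [AddCommGroup M] [Module R M]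
    (x : Fin n → M) : mact (A + B) M x = mact A M x + mact B M x := by
  ext j
  simp [mact_apply, add_smul, Finset.sum_add_distrib]

def cmat (D : MData R) (M : ModuleCat.{u} R) (A : ∀ j, Matrix (Fin (D.r j)) (Fin (D.r j)) R)
    (hA : ∀ i j, i + 1 = j → A j * D.D i j = D.D i j * A i) : cpx D M ⟶ cpx D M where
  f j := ModuleCat.ofHom (mact (A j) M)
  comm' i j hij := by
    refine ModuleCat.hom_ext (LinearMap.ext fun x => ?_)
    have key : ∀ x : Fin (D.r i) → M, mact (D.D i j) M (mact (A i) M x) = mact (A j) M (mact (D.D i j) M x) := by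
      intro x
      rw [mact_mul, mact_mul, hA i j hij]
    exact key x

def Umat (D : MData R) (G : ∀ i j : ℤ, Matrix (Fin (D.r j)) (Fin (D.r i)) R) (j : ℤ) :
    Matrix (Fin (D.r j)) (Fin (D.r j)) R :=
  D.D (j - 1) j * G j (j - 1) + G (j + 1) j * D.D j (j + 1)

theorem Umat_eq (D : MData R) (G : ∀ i j : ℤ, Matrix (Fin (D.r j)) (Fin (D.r i)) R) (i j k : ℤ)
    (h : i + 1 = j) (h' : j + 1 = k) : Umat D G j = D.D i j * G j i + G k j * D.D j k := by
  obtain rfl : i = j - 1 := by omega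
  subst h'
  rfl

theorem Umat_comm (D : MData R) (G : ∀ i j : ℤ, Matrix (Fin (D.r j)) (Fin (D.r i)) R) (i j : ℤ)
    (h : i + 1 = j) : Umat D G j * D.D i j = D.D i j * Umat D G i := by
  rw [Umat_eq D G i j (j + 1) h rfl, Umat_eq D G (i - 1) i j (by omega) h, Matrix.add_mul, Matrix.mul_add,
    Matrix.mul_assoc (G _ _), D.sq, Matrix.mul_zero, add_zero, ← Matrix.mul_assoc (D.D i j) (D.D _ _), D.sq,
    Matrix.zero_mul, zero_add, Matrix.mul_assoc]

variable [HasDerivedCategory.{w'} (ModuleCat.{u} R)]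

theorem cmat_U_zero (D : MData R) (M : ModuleCat.{u} R) (G : ∀ i j : ℤ, Matrix (Fin (D.r j)) (Fin (D.r i)) R) :
    Q.map (cmat D M (Umat D G) (Umat_comm D G)) = 0 := by
  let H : ∀ i j, (ComplexShape.up ℤ).Rel j i → ((cpx D M).X i ⟶ (cpx D M).X j) := fun i j _ =>
    ModuleCat.ofHom (mact (G i j) M)
  have e : cmat D M (Umat D G) (Umat_comm D G) = Homotopy.nullHomotopicMap' H := by
    ext1 j
    rw [Homotopy.nullHomotopicMap'_f (k₂ := j - 1) (k₀ := j + 1) (by simp) rfl]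
    refine ModuleCat.hom_ext (LinearMap.ext fun x => ?_)
    have key : ∀ x : Fin (D.r j) → M, mact (Umat D G j) M x =
        mact (G (j + 1) j) M (mact (D.D j (j + 1)) M x) + mact (D.D (j - 1) j) M (mact (G j (j - 1)) M x) := by
      intro x
      rw [mact_mul, mact_mul, Umat, mact_add, add_comm]
    exact key x
  rw [e]
  exact Q_map_eq_zero_of_homotopy _ (Homotopy.nullHomotopy' H)

theorem det_mem_annD (D : MData R) (M : ModuleCat.{u} R) (G : ∀ i j : ℤ, Matrix (Fin (D.r j)) (Fin (D.r i)) R) :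
    (∏ j ∈ Finset.Icc D.lo D.hi, (Umat D G j).det) ∈ annD (Q.obj (cpx D M)) := by
  let χ : Polynomial R := ∏ j ∈ Finset.Icc D.lo D.hi, (Umat D G j).charpoly
  have h0 : χ.coeff 0 ∈ annD (Q.obj (cpx D M)) := by
    let W := cmat D M (fun j => Polynomial.aeval (Umat D G j) χ.divX)
      (fun i j h => aeval_intertwine _ _ _ (Umat_comm D G i j h) _)
    have e : χ.coeff 0 • 𝟙 (cpx D M) = - (cmat D M (Umat D G) (Umat_comm D G) ≫ W) := by
      rw [eq_neg_iff_add_eq_zero]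
      ext1 j
      refine ModuleCat.hom_ext (LinearMap.ext fun x => ?_)
      have key : ∀ x : Fin (D.r j) → M, χ.coeff 0 • x + mact (Polynomial.aeval (Umat D G j) χ.divX) M
          (mact (Umat D G j) M x) = 0 := by
        intro x
        by_cases hj : j ∈ Finset.Icc D.lo D.hi
        · have h1 : Polynomial.aeval (Umat D G j) χ = 0 := by
            obtain ⟨q, hq⟩ := Finset.dvd_prod_of_mem (fun j => (Umat D G j).charpoly) hj
            rw [show χ = _ from hq, map_mul, Matrix.aeval_self_charpoly, zero_mul]
          have h2 : Polynomial.aeval (Umat D G j) χ.divX * Umat D G j + χ.coeff 0 • 1 = 0 := by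
            have := congrArg (Polynomial.aeval (Umat D G j)) (Polynomial.divX_mul_X_add χ)
            rw [h1, map_add, map_mul, Polynomial.aeval_X, Polynomial.aeval_C, Algebra.algebraMap_eq_smul_one] at this
            exact this
          have h3 : χ.coeff 0 • x = mact (χ.coeff 0 • (1 : Matrix (Fin (D.r j)) (Fin (D.r j)) R)) M x := by
            rw [mact_smul, mact_one]
          rw [mact_mul, h3, ← mact_add, add_comm, h2, mact_zero]
          rfl
        · have hr : D.r j = 0 := D.bd j (by rw [Finset.mem_Icc] at hj; omega)
          have : IsEmpty (Fin (D.r j)) := by rw [hr]; infer_instance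
          exact Subsingleton.elim _ _
      exact key x
    rw [mem_annD, ← CategoryTheory.Functor.map_id, ← Functor.map_smul, e, Functor.map_neg, Functor.map_comp,
      cmat_U_zero, zero_comp, neg_zero]
  have h1 : ∏ j ∈ Finset.Icc D.lo D.hi, (Umat D G j).det =
      (∏ j ∈ Finset.Icc D.lo D.hi, (-1) ^ Fintype.card (Fin (D.r j))) * χ.coeff 0 := by
    have : χ.coeff 0 = ∏ j ∈ Finset.Icc D.lo D.hi, ((Umat D G j).charpoly).coeff 0 := by
      rw [Polynomial.coeff_zero_prod]
    rw [this, ← Finset.prod_mul_distrib]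
    exact Finset.prod_congr rfl fun j _ => Matrix.det_eq_sign_charpoly_coeff _
  rw [h1]
  exact Ideal.mul_mem_left _ _ h0

theorem split_maps (D : MData R) (M : ModuleCat.{u} R) (i : ℤ) (v φ : Fin (D.r i) → R)
    (hv : ∀ a, ∀ m : M, (D.D i (i + 1)).mulVec v a • m = 0)
    (hφ : ∀ a, ∀ m : M, Matrix.vecMul φ (D.D (i - 1) i) a • m = 0) :
    ∃ (α : (HomologicalComplex.single (ModuleCat.{u} R) (ComplexShape.up ℤ) i).obj M ⟶ cpx D M)
      (β : cpx D M ⟶ (HomologicalComplex.single (ModuleCat.{u} R) (ComplexShape.up ℤ) i).obj M),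
      α ≫ β = (φ ⬝ᵥ v) • 𝟙 _ := by
  let a0 : M →ₗ[R] (Fin (D.r i) → M) := LinearMap.pi fun a => v a • LinearMap.id
  let b0 : (Fin (D.r i) → M) →ₗ[R] M := ∑ a, φ a • LinearMap.proj a
  have ha0 : ∀ m a, a0 m a = v a • m := fun m a => rfl
  have hb0 : ∀ x, b0 x = ∑ a, φ a • x a := fun x => by
    simp only [b0, LinearMap.sum_apply, LinearMap.smul_apply, LinearMap.proj_apply]
  let a1 : M ⟶ (cpx D M).X i := ModuleCat.ofHom a0
  let b1 : (cpx D M).X i ⟶ M := ModuleCat.ofHom b0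
  have ha1 : ∀ k, (ComplexShape.up ℤ).Rel i k → a1 ≫ (cpx D M).d i k = 0 := by
    rintro k rfl
    refine ModuleCat.hom_ext (LinearMap.ext fun m => ?_)
    have key : mact (D.D i (i + 1)) M (a0 m) = 0 := by
      ext j
      rw [mact_apply, Pi.zero_apply, ← hv j m, Matrix.mulVec, dotProduct, Finset.sum_smul]
      exact Finset.sum_congr rfl fun a _ => by rw [ha0, mul_smul]
    exact key
  have hb1 : ∀ k, (ComplexShape.up ℤ).Rel k i → (cpx D M).d k i ≫ b1 = 0 := by
    intro k hk
    obtain rfl : k = i - 1 := eq_sub_of_add_eq hk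
    refine ModuleCat.hom_ext (LinearMap.ext fun x => ?_)
    have key : ∀ x : Fin (D.r (i - 1)) → M, b0 (mact (D.D (i - 1) i) M x) = 0 := by
      intro x
      rw [hb0]
      simp only [mact_apply, Finset.smul_sum, smul_smul]
      rw [Finset.sum_comm]
      refine Finset.sum_eq_zero fun a _ => ?_
      rw [← hφ a (x a), Matrix.vecMul, dotProduct, Finset.sum_smul]
    exact key x
  refine ⟨HomologicalComplex.mkHomFromSingle a1 ha1, HomologicalComplex.mkHomToSingle b1 hb1, ?_⟩
  have h1 : a1 ≫ b1 = (φ ⬝ᵥ v) • 𝟙 M := by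
    refine ModuleCat.hom_ext (LinearMap.ext fun m => ?_)
    have key : b0 (a0 m) = (φ ⬝ᵥ v) • m := by
      rw [hb0, dotProduct, Finset.sum_smul]
      exact Finset.sum_congr rfl fun a _ => by rw [ha0, mul_smul]
    exact key
  apply HomologicalComplex.from_single_hom_ext
  rw [HomologicalComplex.comp_f, HomologicalComplex.mkHomFromSingle_f, HomologicalComplex.mkHomToSingle_f,
    Category.assoc, reassoc_of% h1, HomologicalComplex.smul_f_apply, HomologicalComplex.id_f]
  rw [Linear.smul_comp, Linear.comp_smul, Category.id_comp, Iso.hom_inv_id]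

def WS (s : R) (M : ModuleCat.{u} R) (Y : DerivedCategory (ModuleCat.{u} R)) : Prop :=
  ∀ (k : ℤ) (a : smod R M ⟶ Y⟦k⟧), s • a = 0 → a = 0

theorem WS.mul {s t : R} {M : ModuleCat.{u} R} {Y : DerivedCategory (ModuleCat.{u} R)} (hs : WS s M Y)
    (ht : WS t M Y) : WS (s * t) M Y := fun k a h => ht k a (hs k _ (by rwa [← mul_smul]))

theorem WS.orth {s : R} {M : ModuleCat.{u} R} {Y : DerivedCategory (ModuleCat.{u} R)} (hs : WS s M Y)
    (h : ∀ m : M, s • m = 0) : Orth (smod R M) Y :=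
  orth_of_forall fun k g => hs k g (annD_src (smod_smul_zero M s h) g)

theorem WS.orth_cpx {D : MData R} {M : ModuleCat.{u} R} {i : ℤ} {v φ : Fin (D.r i) → R}
    {Y : DerivedCategory (ModuleCat.{u} R)} (hs : WS (φ ⬝ᵥ v) M Y)
    (hv : ∀ a, ∀ m : M, (D.D i (i + 1)).mulVec v a • m = 0)
    (hφ : ∀ a, ∀ m : M, Matrix.vecMul φ (D.D (i - 1) i) a • m = 0)
    (hY : Orth (Q.obj (cpx D M)) Y) : Orth (smod R M) Y := by
  obtain ⟨α, β, h⟩ := split_maps.{w'} D M i v φ hv hφ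
  have key : ∀ (k : ℤ) (g : (smod R M)⟦-i⟧ ⟶ Y⟦k⟧), (φ ⬝ᵥ v) • g = 0 := by
    intro k g
    let e := smodShift M i
    have h1 : (φ ⬝ᵥ v) • (e.inv ≫ g) = Q.map α ≫ Q.map β ≫ e.inv ≫ g := by
      rw [← Category.assoc (Q.map α), ← Functor.map_comp, h, Functor.map_smul, CategoryTheory.Functor.map_id,
        Linear.smul_comp, Category.id_comp]
    rw [hY.zero_shift k (Q.map β ≫ e.inv ≫ g), comp_zero, ← Linear.comp_smul] at h1
    rw [← cancel_epi e.inv, h1, comp_zero]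
  refine orth_of_forall fun k g => hs k g ?_
  have h2 := key (k + -i) (g⟦-i⟧' ≫ ((shiftFunctorAdd _ k (-i)).inv.app Y))
  rw [← Linear.smul_comp, ← Functor.map_smul] at h2
  apply (shiftFunctor _ (-i)).map_injective
  rw [Functor.map_zero, ← cancel_mono ((shiftFunctorAdd (DerivedCategory (ModuleCat.{u} R)) k (-i)).inv.app Y), zero_comp]
  exact h2

theorem WS_of_orth (M : ModuleCat.{u} R) (f : R) (Y : DerivedCategory (ModuleCat.{u} R))
    (H : ∀ N : ModuleCat.{u} R, (∀ r : R, (∀ m : M, r • m = 0) → ∀ n : N, r • n = 0) →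
      (∀ n : N, f • n = 0) → Orth (smod R N) Y) : WS f M Y := by
  intro k a ha
  let μ : M →ₗ[R] M := f • LinearMap.id
  let p : M ⟶ ModuleCat.of R (M ⧸ LinearMap.range μ) := ModuleCat.ofHom (LinearMap.range μ).mkQ
  have hp := kerSC_ses p (Submodule.mkQ_surjective _)
  let q : M ⟶ ModuleCat.of R (LinearMap.ker p.hom) := ModuleCat.ofHom (LinearMap.codRestrict _ μ (fun m => by
    change (LinearMap.range μ).mkQ (μ m) = 0
    rw [Submodule.mkQ_apply, Submodule.Quotient.mk_eq_zero]
    exact ⟨m, rfl⟩))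
  have hqs : Function.Surjective q := by
    rintro ⟨y, hy⟩
    have hy' : (LinearMap.range μ).mkQ y = 0 := hy
    rw [Submodule.mkQ_apply, Submodule.Quotient.mk_eq_zero] at hy'
    obtain ⟨m, rfl⟩ := hy'
    exact ⟨m, rfl⟩
  have hq := kerSC_ses q hqs
  have T1 := hq.singleTriangle_distinguished
  have T2 := hp.singleTriangle_distinguished
  have o1 : Orth (smod R (kerSC q).X₁) Y := by
    apply H
    · rintro r hr ⟨x, hx⟩
      exact Subtype.ext (hr x)
    · rintro ⟨x, hx⟩
      refine Subtype.ext ?_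
      have hx' : q x = 0 := hx
      have hx2 : μ x = 0 := congrArg (fun z : LinearMap.ker p.hom => (z : M)) hx'
      exact hx2
  have hquo : ∀ r : R, (∀ m : M, r • m ∈ LinearMap.range μ) → ∀ n : M ⧸ LinearMap.range μ, r • n = 0 := by
    intro r hr n
    obtain ⟨m, rfl⟩ := Submodule.mkQ_surjective _ n
    rw [← map_smul, Submodule.mkQ_apply, Submodule.Quotient.mk_eq_zero]
    exact hr m
  have o2 : Orth (smod R (kerSC p).X₃) Y := by
    apply H
    · intro r hr
      exact hquo r fun m => by rw [hr m]; exact zero_mem _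
    · exact hquo f fun m => ⟨m, rfl⟩
  let ι : ModuleCat.of R (LinearMap.ker p.hom) ⟶ M := ModuleCat.ofHom (LinearMap.ker p.hom).subtype
  let F := singleFunctor (ModuleCat.{u} R) 0
  have hfac : f • 𝟙 M = q ≫ ι := rfl
  let a' : F.obj M ⟶ Y⟦k⟧ := a
  have ha' : f • a' = 0 := ha
  have z1 : F.map q ≫ F.map ι ≫ a' = 0 := by
    rw [← Category.assoc, ← Functor.map_comp, ← hfac, Functor.map_smul, CategoryTheory.Functor.map_id,
      Linear.smul_comp, Category.id_comp, ha']
  obtain ⟨l, hl⟩ := ex_yo3 T1 (F.map ι ≫ a') z1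
  have l0 : l = 0 := (o1.shift 1 k).eq_zero l
  rw [l0, comp_zero] at hl
  obtain ⟨l', hl'⟩ := ex_yo2 T2 a' hl
  have l0' : l' = 0 := o2.zero_shift k l'
  rw [l0'] at hl'
  exact hl'.trans comp_zero

end ChainMaps

section Part3

open DerivedCategory

variable {R : Type u} [CommRing R] [HasDerivedCategory.{w'} (ModuleCat.{u} R)]

theorem orth_key {S : Type u} [CommRing S] [IsNoetherianRing S] [Algebra S R] (D0 : MData S)
    (I0 : Ideal S)
    (hI0 : ∀ s, algebraMap S R s ∈ annD (Q.obj (cpx (D0.map (algebraMap S R)) (ModuleCat.of R R))) → s ∈ I0)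
    (Y : DerivedCategory (ModuleCat.{u} R))
    (hY : Orth (Q.obj (cpx (D0.map (algebraMap S R)) (ModuleCat.of R R))) Y) :
    Orth (smod R (ModuleCat.of R (R ⧸ I0.map (algebraMap S R)))) Y := by
  by_contra hno
  obtain ⟨p, ⟨hp1, hp2⟩, hpmax⟩ : ∃ p : Ideal S, (I0 ≤ p ∧ ¬ Orth (smod R (ModuleCat.of R (R ⧸ p.map (algebraMap S R)))) Y) ∧
      ∀ J : Ideal S, (I0 ≤ J ∧ ¬ Orth (smod R (ModuleCat.of R (R ⧸ J.map (algebraMap S R)))) Y) → ¬ p < J := by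
    obtain ⟨p, h1, h2⟩ := set_has_maximal_iff_noetherian.2 (inferInstanceAs (IsNoetherian S S))
      {J : Ideal S | I0 ≤ J ∧ ¬ Orth (smod R (ModuleCat.of R (R ⧸ J.map (algebraMap S R)))) Y} ⟨I0, le_rfl, hno⟩
    exact ⟨p, h1, h2⟩
  let M : ModuleCat.{u} R := ModuleCat.of R (R ⧸ p.map (algebraMap S R))
  have hkill : ∀ r ∈ p.map (algebraMap S R), ∀ m : M, r • m = 0 := by
    intro r hr
    have key : ∀ m : R ⧸ p.map (algebraMap S R), r • m = 0 := by
      intro m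
      obtain ⟨m, rfl⟩ := Ideal.Quotient.mk_surjective m
      rw [Algebra.smul_def, Ideal.Quotient.algebraMap_eq, Ideal.Quotient.eq_zero_iff_mem.2 hr, zero_mul]
    exact key
  have hWS : ∀ f, f ∉ p → WS (algebraMap S R f) M Y := by
    intro f hf
    apply WS_of_orth
    intro N hN hfN
    have hlt : p < p ⊔ Ideal.span {f} := by
      refine lt_of_le_of_ne le_sup_left fun h => hf ?_
      rw [h]
      exact Ideal.mem_sup_right (Ideal.mem_span_singleton_self f)
    have ho : Orth (smod R (ModuleCat.of R (R ⧸ (p ⊔ Ideal.span {f}).map (algebraMap S R)))) Y := by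
      by_contra h
      exact hpmax _ ⟨hp1.trans hlt.le, h⟩ hlt
    refine smod_mem_of_killed (orth_isLocalizing.{u} Y) _ ho N ?_
    let A : Ideal R := Module.annihilator R N
    have hA : (p ⊔ Ideal.span {f}).map (algebraMap S R) ≤ A := by
      rw [Ideal.map_sup, Ideal.map_span, Set.image_singleton, sup_le_iff, Ideal.span_singleton_le_iff_mem]
      exact ⟨fun r hr => Module.mem_annihilator.2 (hN r (hkill r hr)), Module.mem_annihilator.2 hfN⟩
    intro r hr
    exact Module.mem_annihilator.1 (hA hr)
  have hprime : p.IsPrime := by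
    refine ⟨?_, ?_⟩
    · rintro rfl
      apply hp2
      have h1 : ∀ m : M, (1 : R) • m = 0 := hkill 1 (by rw [Ideal.map_top]; trivial)
      have hW : WS (1 : R) M Y := fun k a h => by rwa [one_smul] at h
      exact hW.orth h1
    · intro f g hfg
      by_contra! h
      apply hp2
      refine ((hWS f h.1).mul (hWS g h.2)).orth ?_
      rw [← map_mul]
      exact hkill _ (Ideal.mem_map_of_mem _ hfg)
  let π := (algebraMap (S ⧸ p) (FractionRing (S ⧸ p))).comp (Ideal.Quotient.mk p)
  have hπ : ∀ s, π s = 0 ↔ s ∈ p := by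
    intro s
    rw [← Ideal.Quotient.eq_zero_iff_mem]
    exact map_eq_zero_iff _ (IsFractionRing.injective (S ⧸ p) (FractionRing (S ⧸ p)))
  rcases dich π (fracs_quot p) D0 with ⟨i, v, φ, hv, hφ, hne⟩ | ⟨G, hG⟩
  · apply hp2
    have hs : φ ⬝ᵥ v ∉ p := fun h => hne ((hπ _).2 h)
    have e1 : ((algebraMap S R) ∘ φ) ⬝ᵥ ((algebraMap S R) ∘ v) = algebraMap S R (φ ⬝ᵥ v) := by
      rw [RingHom.map_dotProduct]
    refine WS.orth_cpx (D := D0.map (algebraMap S R)) (i := i) (v := (algebraMap S R) ∘ v)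
      (φ := (algebraMap S R) ∘ φ) (M := M) ?_ ?_ ?_ (orth_loc.{u} hY (cpx_mem_loc _ _))
    · have := hWS _ hs
      rw [← e1] at this
      exact this
    · have key : ∀ (a : Fin (D0.r (i + 1))) (m : M),
          ((D0.D i (i + 1)).map (algebraMap S R)).mulVec ((algebraMap S R) ∘ v) a • m = 0 := by
       intro a m
       have e2 : ((D0.D i (i + 1)).map (algebraMap S R)).mulVec ((algebraMap S R) ∘ v) a =
          algebraMap S R ((D0.D i (i + 1)).mulVec v a) := by
        rw [RingHom.map_mulVec]
       refine hkill _ ?_ m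
       have := Ideal.mem_map_of_mem (algebraMap S R) ((hπ _).1 (hv a))
       rw [← e2] at this
       exact this
      exact key
    · have key : ∀ (a : Fin (D0.r (i - 1))) (m : M),
          Matrix.vecMul ((algebraMap S R) ∘ φ) ((D0.D (i - 1) i).map (algebraMap S R)) a • m = 0 := by
       intro a m
       have e2 : Matrix.vecMul ((algebraMap S R) ∘ φ) ((D0.D (i - 1) i).map (algebraMap S R)) a =
          algebraMap S R (Matrix.vecMul φ (D0.D (i - 1) i) a) := by
        rw [RingHom.map_vecMul]
       refine hkill _ ?_ m
       have := Ideal.mem_map_of_mem (algebraMap S R) ((hπ _).1 (hφ a))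
       rw [← e2] at this
       exact this
      exact key
  · have h1 := det_mem_annD (D0.map (algebraMap S R)) (ModuleCat.of R R)
      (fun i j => (G i j).map (algebraMap S R))
    have h2 : ∀ j, (Umat (D0.map (algebraMap S R)) (fun i j => (G i j).map (algebraMap S R)) j).det =
        algebraMap S R (D0.D (j - 1) j * G j (j - 1) + G (j + 1) j * D0.D j (j + 1)).det := by
      intro j
      rw [RingHom.map_det]
      congr 1
      rw [RingHom.mapMatrix_apply, Matrix.map_add _ (fun a b => map_add (algebraMap S R) a b), Matrix.map_mul, Matrix.map_mul]
      rfl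
    rw [Finset.prod_congr rfl fun j _ => h2 j, ← map_prod] at h1
    have h3 := (hπ _).2 (hp1 (hI0 _ h1))
    rw [map_prod, Finset.prod_eq_zero_iff] at h3
    obtain ⟨j, -, hj⟩ := h3
    exact hG j hj

theorem part3 (C : DerivedCategory (ModuleCat.{u} R)) (hC : IsCompactObj.{u} C) :
    ∃ I : Ideal R, I.FG ∧ Loc.{u} {C} = Loc.{u} {smod R (ModuleCat.of R (R ⧸ I))} := by
  obtain ⟨D, hD, h⟩ := compact_model C hC
  obtain ⟨S, D0, hS, rfl⟩ := D.exists_noeth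
  let I0 : Ideal S := (annD (Q.obj (cpx (D0.map (algebraMap S R)) (ModuleCat.of R R)))).comap (algebraMap S R)
  have hfg : (I0.map (algebraMap S R)).FG := Ideal.FG.map (IsNoetherian.noetherian I0) _
  refine ⟨I0.map (algebraMap S R), hfg, h.trans (Set.Subset.antisymm ?_ ?_)⟩
  · refine loc_singleton_le (loc_isLocalizing _) ?_
    exact lemmaZ _ hfg (loc_isLocalizing _) (mem_loc_self _) _ (cpx_bddD _ _)
      (Ideal.map_comap_le.trans Ideal.le_radical)
  · refine loc_singleton_le (loc_isLocalizing _) ?_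
    rw [mem_loc_iff hD (smallHom_DR _)]
    intro Y hY
    exact orth_key D0 I0 (fun s hs => hs) Y hY

end Part3



section Statement2

variable (R : Type u) [CommRing R] [HasDerivedCategory.{w'} (ModuleCat.{u} R)]

/-- Theorem: `√I ↦ Loc(R/I)` (for `I` finitely generated) is a well-defined,
inclusion-reversing bijection from the Zariski lattice of `R` (radicals of
finitely generated ideals, ordered by inclusion) onto the poset of localizing
subcategories of `D(R)` generated by a single compact object; in particular
there is an order isomorphism between the Zariski lattice and the opposite of
that poset. -/
theorem zariskiLattice_orderIso_singleCompactLoc :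
    -- inclusion-reversing comparison (whence well-definedness and injectivity):
    (∀ I J : Ideal R, I.FG → J.FG →
      (I.radical ≤ J.radical ↔ locQuot R J ⊆ locQuot R I)) ∧
    -- every Loc(R/I) with I f.g. is generated by a single compact object:
    (∀ I : Ideal R, I.FG →
      ∃ C : DerivedCategory (ModuleCat.{u} R), IsCompactObj.{u} C ∧
        locQuot R I = Loc.{u} {C}) ∧
    -- surjectivity: every localizing subcategory generated by a single compact
    -- object is of the form Loc(R/I) with I f.g.:
    (∀ C : DerivedCategory (ModuleCat.{u} R), IsCompactObj.{u} C →
      ∃ I : Ideal R, I.FG ∧ Loc.{u} {C} = locQuot R I) ∧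
    -- the induced order isomorphism with the opposite poset:
    ∃ e : {K : Ideal R // ∃ I : Ideal R, I.FG ∧ K = I.radical} ≃o
        ({L : Set (DerivedCategory (ModuleCat.{u} R)) //
          ∃ C : DerivedCategory (ModuleCat.{u} R), IsCompactObj.{u} C ∧
            L = Loc.{u} {C}})ᵒᵈ,
      ∀ (I : Ideal R) (hI : I.FG),
        (OrderDual.ofDual (e ⟨I.radical, I, hI, rfl⟩)).1 = locQuot R I := by
  have h1 : ∀ I J : Ideal R, I.FG → J.FG →
      (I.radical ≤ J.radical ↔ locQuot R J ⊆ locQuot R I) := fun I J hI _ =>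
    ⟨part1_mp I J hI, part1_mpr I J⟩
  have h2 : ∀ I : Ideal R, I.FG →
      ∃ C : DerivedCategory (ModuleCat.{u} R), IsCompactObj.{u} C ∧
        locQuot R I = Loc.{u} {C} := part2
  have h3 : ∀ C : DerivedCategory (ModuleCat.{u} R), IsCompactObj.{u} C →
      ∃ I : Ideal R, I.FG ∧ Loc.{u} {C} = locQuot R I := part3
  refine ⟨h1, h2, h3, ?_⟩
  let F : {K : Ideal R // ∃ I : Ideal R, I.FG ∧ K = I.radical} → ({L : Set (DerivedCategory (ModuleCat.{u} R)) //
          ∃ C : DerivedCategory (ModuleCat.{u} R), IsCompactObj.{u} C ∧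
            L = Loc.{u} {C}})ᵒᵈ := fun K => OrderDual.toDual ⟨locQuot R K.2.choose, h2 _ K.2.choose_spec.1⟩
  have hF : ∀ K K', F K ≤ F K' ↔ K ≤ K' := by
    intro K K'
    have e := h1 K.2.choose K'.2.choose K.2.choose_spec.1 K'.2.choose_spec.1
    rw [← K.2.choose_spec.2, ← K'.2.choose_spec.2] at e
    exact e.symm
  have hFl : ∀ (I : Ideal R) (hI : I.FG), (OrderDual.ofDual (F ⟨I.radical, I, hI, rfl⟩)).1 = locQuot R I := by
    intro I hI
    let K : {K : Ideal R // ∃ I : Ideal R, I.FG ∧ K = I.radical} := ⟨I.radical, I, hI, rfl⟩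
    have hK : I.radical = K.2.choose.radical := K.2.choose_spec.2
    have hfg := K.2.choose_spec.1
    exact Set.Subset.antisymm ((h1 _ _ hI hfg).1 hK.le) ((h1 _ _ hfg hI).1 hK.ge)
  let emb : {K : Ideal R // ∃ I : Ideal R, I.FG ∧ K = I.radical} ↪o ({L : Set (DerivedCategory (ModuleCat.{u} R)) //
          ∃ C : DerivedCategory (ModuleCat.{u} R), IsCompactObj.{u} C ∧
            L = Loc.{u} {C}})ᵒᵈ := OrderEmbedding.ofMapLEIff F hF
  refine ⟨RelIso.ofSurjective emb ?_, hFl⟩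
  intro L
  obtain ⟨C, hC, hL⟩ := (OrderDual.ofDual L).2
  obtain ⟨I, hI, hCI⟩ := h3 C hC
  refine ⟨⟨I.radical, I, hI, rfl⟩, ?_⟩
  apply OrderDual.ofDual.injective
  apply Subtype.ext
  rw [hL, hCI]
  exact hFl I hI

end Statement2
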